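/- Let u_- ≠ u_+ satisfy g(u_-) = g(u_+) = 0 and g'(u_-) < 0 < g'(u_+); set σ := (f(u_+) − f(u_-))/(u_+ − u_-) and assume the strict entropy (Oleinik) conditions f'(u_-) > σ > f'(u_+) and (f(v) − f(u_-))/(v − u_-) > σ > (f(v) − f(u_+))/(v − u_+) for every v strictly between u_- and u_+. Let ū(x) := u_- for x < 0 and ū(x) := u_+ for x > 0, set κ⁺ := g'(u_+)/(σ − f'(u_+)), let ρ be an integrable sub-exponential weight, and set Ω(x) := exp(−κ⁺·max(x,0)) and Ω_ρ(x) := ρ(max(x,0))·exp(−κ⁺·max(x,0)). Then there exist positive C, θ, δ_0 such that: for every u_0 : ℝ → ℝ that is C^1 on ℝ∖{0}, with (u_0 − ū)/Ω_ρ and (u_0 − ū)'/Ω_ρ bounded and uniformly continuous separately on (−∞,0) and on (0,∞), and E_0 := sup_{x≠0} max(|(u_0 − ū)(x)|, |(u_0 − ū)'(x)|)/Ω_ρ(x) ≤ δ_0, there exist ψ ∈ C^2([0,∞);ℝ) with ψ(0) = 0 and a bounded weak solution u : [0,∞)×ℝ → ℝ of ∂_t u + ∂_x(f(u)) = g(u)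 with u(t,·) → u_0 in L^1_loc(ℝ) as t → 0⁺, such that u is C^1 on {(t,x) : x ≠ σt + ψ(t)} and, for all t ≥ 0: sup_{x≠0} max(|u(t, x + σt + ψ(t)) − ū(x)|, |∂_x u(t, x + σt + ψ(t))|)/Ω(x) + |ψ'(t)| + |ψ''(t)| ≤ C·E_0·ρ(θ·t); moreover there exists ψ_∞ ∈ ℝ with |ψ_∞| ≤ C·E_0 and |ψ(t) − ψ_∞| ≤ C·E_0·∫_{θt}^∞ ρ(s) ds for all t ≥ 0. -/

import Mathlib

/-!
The solution is built explicitly. On each side of the shock, work in the frame moving with speed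
`σ` and construct a classical solution defined for all `x` that is close to the constant state
`a = u_±`. Near the hyperbolic zero `a` of `g` there is a `C¹` coordinate in which `w' = g w` becomes
`z' = λ z`, with `λ = g' a` (`LinCoord`, `exists_linCoord`). Along characteristics the solution is
then `exp (λ t)` times its value at the foot `x₀`, and the characteristic is at
`x₀ - c t + (B (z t) - B (z 0)) / λ`, where `c = σ - f' a` and `B' z = (f' (H z) - f' a) / z`. The
correction is small as long as `z` is, so the characteristics foliate the plane and the formula
defines a `C¹` solution (`exists_implicit`, `exists_family`).

On the left `λ < 0`, and the exponential damping beats `ρ (θ t)` for small `θ` (`left_sol`). On the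
right `λ > 0`, but `c > 0`: the characteristic through a point near or ahead of the shock starts
from `x₀` at least about `c t`, where the data carry the factor `exp (-κ c t) = exp (-λ t)`. The
critical weight thus compensates the growth exactly, and the extra factor `ρ (c t)` gives the decay
rate (`right_sol`).

The shock position solves the Rankine-Hugoniot equation
`σ + ψ' = (f v_r - f v_l) / (v_r - v_l)` at `x = ψ t`, a global ordinary differential equation whose
right-hand side is controlled by the perturbations (`exists_shock`, `shock_deriv_bounds`). Since `ρ`
is integrable, `ψ` stays small and converges (`exists_limit`). Gluing the two solutions along the
shock gives a weak solution: in coordinates following the shock the weak formulation is the integral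
of a divergence on each side, and the boundary fluxes cancel (`isWeakSol_of_shock`).
-/

open Filter Set Function MeasureTheory

/-- A sub-exponential weight: positive, nonincreasing, tending to `0` at `+∞`,
bounded below by a decaying exponential, and satisfying the convolution bound
`∫_0^t e^{−ω(t−s)} ρ(s) ds ≤ C ρ(t)`. -/
def IsSubExpWeight (ρ : ℝ → ℝ) : Prop :=
  (∀ t, 0 ≤ t → 0 < ρ t) ∧
  (∀ s t, 0 ≤ s → s ≤ t → ρ t ≤ ρ s) ∧
  Tendsto ρ atTop (nhds 0) ∧
  (∃ C > (0:ℝ), ∃ ω > (0:ℝ), ∀ t, 0 ≤ t → C * Real.exp (-ω * t) ≤ ρ t) ∧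
  (∃ C > (0:ℝ), ∃ ω > (0:ℝ), ∀ t, 0 ≤ t →
    (∫ s in (0:ℝ)..t, Real.exp (-ω * (t - s)) * ρ s) ≤ C * ρ t)

/-- Bounded and uniformly continuous on a set. -/
def IsBUCOn (h : ℝ → ℝ) (S : Set ℝ) : Prop :=
  (∃ M, ∀ x ∈ S, |h x| ≤ M) ∧ UniformContinuousOn h S

/-- Weak solution of `∂_t u + ∂_x (f(u)) = g(u)` on `(0,∞) × ℝ`, tested against smooth
compactly supported test functions supported in `(0,∞) × ℝ`. -/
def IsWeakSol (f g : ℝ → ℝ) (u : ℝ → ℝ → ℝ) : Prop :=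
  ∀ φ : ℝ → ℝ → ℝ, ContDiff ℝ (⊤ : ℕ∞) (uncurry φ) →
    HasCompactSupport (uncurry φ) →
    tsupport (uncurry φ) ⊆ Ioi (0:ℝ) ×ˢ (univ : Set ℝ) →
    (∫ p : ℝ × ℝ, (u p.1 p.2 * deriv (fun s => φ s p.2) p.1
      + f (u p.1 p.2) * deriv (fun y => φ p.1 y) p.2
      + g (u p.1 p.2) * φ p.1 p.2)) = 0

/-! ### The linearizing coordinate at an equilibrium -/

/-- A right inverse of an injective `C¹` map with invertible derivatives is `C¹`. -/
lemma contDiff_one_of_rightInverse {E : Type*} [NormedAddCommGroup E] [NormedSpace ℝ E]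
    [CompleteSpace E] {F Finv : E → E} (hF : ContDiff ℝ 1 F) (hinj : Injective F)
    (hinv : ∀ y, F (Finv y) = y) (hd : ∀ x, ∃ e : E ≃L[ℝ] E, HasFDerivAt F (e : E →L[ℝ] E) x) :
    ContDiff ℝ 1 Finv := by
  rw [contDiff_iff_contDiffAt]
  intro y
  obtain ⟨e, he⟩ := hd (Finv y)
  have h1 := hF.contDiffAt (x := Finv y)
  have h2 := h1.to_localInverse he one_ne_zero
  rw [hinv] at h2
  refine h2.congr_of_eventuallyEq ?_
  have h3 := (h1.hasStrictFDerivAt' he one_ne_zero).eventually_right_inverse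
  rw [hinv] at h3
  filter_upwards [h3] with z hz
  exact hinj ((hinv z).trans hz.symm)

lemma contDiff_one_of_rightInverse_real {h H k : ℝ → ℝ} (hk : Continuous k)
    (hh : ∀ x, HasDerivAt h (k x) x) (hk0 : ∀ x, 0 < k x) (hinv : ∀ y, h (H y) = y) :
    ContDiff ℝ 1 h ∧ (∀ x, H (h x) = x) ∧ ContDiff ℝ 1 H ∧
      ∀ y, HasDerivAt H (k (H y))⁻¹ y := by
  have hh1 : ContDiff ℝ 1 h := by
    rw [contDiff_one_iff_deriv]
    refine ⟨fun x => (hh x).differentiableAt, ?_⟩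
    rwa [funext fun x => (hh x).deriv]
  have hmono : StrictMono h := strictMono_of_deriv_pos fun x => by rw [(hh x).deriv]; exact hk0 x
  have hH : ContDiff ℝ 1 H := by
    refine contDiff_one_of_rightInverse hh1 hmono.injective hinv fun x => ?_
    exact ⟨ContinuousLinearEquiv.unitsEquivAut ℝ (Units.mk0 _ (hk0 x).ne'), by
      have h1 : ((ContinuousLinearEquiv.unitsEquivAut ℝ (Units.mk0 _ (hk0 x).ne') : ℝ ≃L[ℝ] ℝ) :
          ℝ →L[ℝ] ℝ) = ContinuousLinearMap.toSpanSingleton ℝ (k x) := by ext; simp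
      rw [h1]; exact (hh x).hasFDerivAt⟩
  refine ⟨hh1, fun x => hmono.injective (hinv _), hH, fun y => ?_⟩
  exact HasDerivAt.of_local_left_inverse hH.continuous.continuousAt (hh _) (hk0 _).ne'
    (Eventually.of_forall hinv)

/-- The difference quotient of a smooth function at `a` is differentiable at `a`. -/
lemma differentiableAt_dslope_same {g : ℝ → ℝ} (hg : ContDiff ℝ 2 g) (a : ℝ) :
    DifferentiableAt ℝ (dslope g a) a := by
  have hg1 : Differentiable ℝ g := hg.differentiable (by norm_num)
  have hg2 : ContDiff ℝ 1 (deriv g) := by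
    have : ContDiff ℝ (1 + 1) g := by simpa [one_add_one_eq_two] using hg
    exact (contDiff_succ_iff_deriv.1 this).2.2
  have hg3 : HasDerivAt (deriv g) (deriv (deriv g) a) a :=
    (hg2.differentiable (by norm_num) a).hasDerivAt
  have key : Tendsto (fun s => (g s - g a - deriv g a * (s - a)) / (s - a) ^ 2)
      (nhdsWithin a {a}ᶜ) (nhds (deriv (deriv g) a / 2)) := by
    have hA : ∀ s, HasDerivAt (fun s => g s - g a - deriv g a * (s - a))
        (deriv g s - deriv g a) s := fun s => by
      exact (((hg1 s).hasDerivAt.sub_const (g a)).sub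
        (((hasDerivAt_id s).sub_const a).const_mul (deriv g a))).congr_deriv (by simp)
    have hB : ∀ s, HasDerivAt (fun s => (s - a) ^ 2) (2 * (s - a)) s := fun s => by
      exact (((hasDerivAt_id s).sub_const a).pow 2).congr_deriv (by simp)
    refine HasDerivAt.lhopital_zero_nhdsNE (Eventually.of_forall hA) (Eventually.of_forall hB) ?_ ?_ ?_ ?_
    · filter_upwards [self_mem_nhdsWithin] with s hs
      simpa [sub_eq_zero] using hs
    · have := ((hA a).continuousAt.tendsto).mono_left (nhdsWithin_le_nhds (s := {a}ᶜ))
      simpa using this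
    · have := ((hB a).continuousAt.tendsto).mono_left (nhdsWithin_le_nhds (s := {a}ᶜ))
      simpa using this
    · have := (hasDerivAt_iff_tendsto_slope.1 hg3).div_const 2
      refine this.congr fun s => ?_
      rw [slope_def_field, div_div, mul_comm]
  have : HasDerivAt (dslope g a) (deriv (deriv g) a / 2) a := by
    rw [hasDerivAt_iff_tendsto_slope]
    refine key.congr' ?_
    filter_upwards [self_mem_nhdsWithin] with s hs
    have hs' : s - a ≠ 0 := sub_ne_zero.2 hs
    rw [slope_def_field, dslope_of_ne _ hs, dslope_same, slope_def_field]
    field_simp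
  exact this.differentiableAt

lemma continuous_dslope_of_differentiable {g : ℝ → ℝ} (hg : Continuous g) {a : ℝ}
    (h : DifferentiableAt ℝ g a) : Continuous (dslope g a) := by
  rw [continuous_iff_continuousAt]
  intro b
  by_cases hb : b = a
  · subst hb; exact continuousAt_dslope_same.2 h
  · exact (continuousAt_dslope_of_ne hb).2 hg.continuousAt

lemma two_le_top : (2 : WithTop ℕ∞) ≤ ((⊤ : ℕ∞) : WithTop ℕ∞) :=
  WithTop.coe_le_coe.2 (le_top (a := (2 : ℕ∞)))

lemma contDiff_one_deriv {f : ℝ → ℝ} (hf : ContDiff ℝ (⊤ : ℕ∞) f) : ContDiff ℝ 1 (deriv f) := by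
  have : ContDiff ℝ (1 + 1) f := by
    rw [one_add_one_eq_two]; exact hf.of_le two_le_top
  exact (contDiff_succ_iff_deriv.1 this).2.2

lemma hasDerivAt_primitive {q : ℝ → ℝ} (hq : Continuous q) (a w : ℝ) :
    HasDerivAt (fun w => ∫ y in a..w, q y) (q w) w :=
  (hq.integral_hasStrictDerivAt a w).hasDerivAt

/-- A global `C¹` coordinate `h` with inverse `H` that linearizes `w' = g w` near the hyperbolic
equilibrium `a`: by `lin`, `t ↦ H z` solves `w' = g w` along `z' = (g' a) z` as long as `|z| ≤ r`.
The function `B` satisfies `B' z = (f' (H z) - f' a) / z`, stated as `disp` without the division;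
it makes the displacement of characteristics explicit. The number `L` bounds all derivatives, that
of `B` only for `|z| ≤ r`. -/
structure LinCoord (f g : ℝ → ℝ) (a : ℝ) (h H B : ℝ → ℝ) (L r : ℝ) : Prop where
  hh : ContDiff ℝ 1 h
  hH : ContDiff ℝ 1 H
  hB : ContDiff ℝ 1 B
  Lpos : 0 < L
  rpos : 0 < r
  h_eq : h a = 0
  H_h : ∀ w, H (h w) = w
  H_zero : H 0 = a
  dh : ∀ w, |deriv h w| ≤ L
  dH : ∀ z, |deriv H z| ≤ L
  dB : ∀ z, |z| ≤ r → |deriv B z| ≤ L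
  lin : ∀ z, |z| ≤ r → deriv H z * (deriv g a * z) = g (H z)
  disp : ∀ z, deriv B z * z = deriv f (H z) - deriv f a

/-- Write `λ = g' a`. Near `a`, the coordinate is `h w = (w - a) * exp (∫ q)`, the primitive
integrand `q` being the continuous extension of `λ / g w - 1 / (w - a)`, so that `h' * g = λ * h`.
It is extended globally by freezing `h'` outside a neighbourhood of `a`. -/
lemma exists_linCoord {f g : ℝ → ℝ} (hf : ContDiff ℝ (⊤ : ℕ∞) f) (hg : ContDiff ℝ (⊤ : ℕ∞) g)
    {a : ℝ} (hga : g a = 0) (hg' : deriv g a ≠ 0) :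
    ∃ h H B L r, LinCoord f g a h H B L r := by
  set l := deriv g a with hl
  set g1 := dslope g a with hg1
  have hg1d : DifferentiableAt ℝ g1 a := differentiableAt_dslope_same (hg.of_le two_le_top) a
  have hg1c : Continuous g1 := continuous_dslope_of_differentiable hg.continuous
    (hg.differentiable (by simp) a)
  have hg1a : g1 a = l := dslope_same _ _
  set g2 := dslope g1 a
  have hg2c : Continuous g2 := continuous_dslope_of_differentiable hg1c hg1d
  have hmul1 : ∀ w, (w - a) * g1 w = g w := fun w => by
    have := sub_smul_dslope g a w
    simpa [hga] using this
  have hmul2 : ∀ w, (w - a) * g2 w = g1 w - l := fun w => by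
    have := sub_smul_dslope g1 a w
    simpa [hg1a] using this
  obtain ⟨s, hs, hsb⟩ : ∃ s > 0, ∀ w, |w - a| ≤ s → 0 < l * g1 w := by
    have : ∀ᶠ w in nhds a, 0 < l * g1 w := by
      refine (continuous_const.mul hg1c).continuousAt.eventually (lt_mem_nhds ?_)
      change 0 < l * g1 a
      rw [hg1a]; exact mul_self_pos.2 hg'
    obtain ⟨s, hs, h⟩ := Metric.eventually_nhds_iff.1 this
    refine ⟨s / 2, by positivity, fun w hw => h ?_⟩
    rw [Real.dist_eq]; linarith
  -- clamping to the neighbourhood where `g1` does not vanish makes the coordinate global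
  set cl : ℝ → ℝ := fun w => max (a - s) (min w (a + s)) with hcl
  have hclc : Continuous cl := by fun_prop
  have hclb : ∀ w, |cl w - a| ≤ s := fun w => by
    rw [abs_le]; constructor
    · have := le_max_left (a - s) (min w (a + s)); simp only [hcl]; linarith
    · have : cl w ≤ a + s := max_le (by linarith) (min_le_right _ _)
      linarith
  have hclid : ∀ w, |w - a| ≤ s → cl w = w := fun w hw => by
    rw [abs_le] at hw
    simp only [hcl]
    rw [min_eq_left (by linarith), max_eq_right (by linarith)]
  have hg1ne : ∀ w, g1 (cl w) ≠ 0 := fun w h => by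
    have := hsb _ (hclb w); rw [h] at this; simp at this
  set q : ℝ → ℝ := fun w => -(g2 (cl w)) / g1 (cl w)
  have hqc : Continuous q := ((hg2c.comp hclc).neg).div (hg1c.comp hclc) hg1ne
  set E : ℝ → ℝ := fun w => Real.exp (∫ y in a..w, q y)
  have hEd : ∀ w, HasDerivAt E (E w * q w) w := fun w =>
    (hasDerivAt_primitive hqc _ w).exp
  have hEc : Continuous E := continuous_iff_continuousAt.2 fun w => (hEd w).continuousAt
  set k : ℝ → ℝ := fun w => l * E (cl w) / g1 (cl w)
  have hkc : Continuous k := (continuous_const.mul (hEc.comp hclc)).div (hg1c.comp hclc) hg1ne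
  have hkpos : ∀ w, 0 < k w := fun w => by
    have h1 := hsb _ (hclb w)
    have h2 : k w = E (cl w) * (l * g1 (cl w)) / (g1 (cl w)) ^ 2 := by
      have := hg1ne w
      simp only [k]; field_simp
    rw [h2]
    have := hg1ne w
    have := Real.exp_pos (∫ y in a..(cl w), q y)
    positivity
  have hkcl : ∀ w, k w = k (cl w) := fun w => by simp only [k]; rw [hclid _ (hclb w)]
  obtain ⟨m, hm, hmk⟩ : ∃ m > 0, ∀ w, m ≤ k w := by
    obtain ⟨w0, -, hw0⟩ := (isCompact_Icc (a := a - s) (b := a + s)).exists_isMinOn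
      ⟨a, by constructor <;> linarith⟩ hkc.continuousOn
    refine ⟨k w0, hkpos _, fun w => ?_⟩
    rw [hkcl w]
    have := abs_le.1 (hclb w)
    exact hw0 ⟨by linarith, by linarith⟩
  obtain ⟨M, hMk⟩ : ∃ M, ∀ w, k w ≤ M := by
    obtain ⟨w0, -, hw0⟩ := (isCompact_Icc (a := a - s) (b := a + s)).exists_isMaxOn
      ⟨a, by constructor <;> linarith⟩ hkc.continuousOn
    refine ⟨k w0, fun w => ?_⟩
    rw [hkcl w]
    have := abs_le.1 (hclb w)
    exact hw0 ⟨by linarith, by linarith⟩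
  set h : ℝ → ℝ := fun w => ∫ y in a..w, k y
  have hhd : ∀ w, HasDerivAt h (k w) w := fun w =>
    hasDerivAt_primitive hkc _ w
  have hha : h a = 0 := intervalIntegral.integral_same
  have hhc : Continuous h := continuous_iff_continuousAt.2 fun w => (hhd w).continuousAt
  have hlow : ∀ x y, x ≤ y → m * (y - x) ≤ h y - h x := fun x y hxy => by
    refine Convex.mul_sub_le_image_sub_of_le_deriv convex_univ hhc.continuousOn
      (fun w _ => (hhd w).differentiableAt.differentiableWithinAt)
      (fun w _ => by rw [(hhd w).deriv]; exact hmk w) x (mem_univ _) y (mem_univ _) hxy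
  have hsurj : Surjective h := by
    refine hhc.surjective ?_ ?_
    · refine tendsto_atTop_mono' _ (f₁ := fun w => m * (w - a)) ?_ ?_
      · filter_upwards [eventually_ge_atTop a] with w hw
        have := hlow a w hw; rw [hha] at this; linarith
      · exact (tendsto_atTop_add_const_right _ _ tendsto_id).const_mul_atTop hm
    · refine tendsto_atBot_mono' _ (f₁ := fun w => m * (w - a)) ?_ ?_
      · filter_upwards [eventually_le_atBot a] with w hw
        have := hlow w a hw; rw [hha] at this; linarith
      · exact (tendsto_atBot_add_const_right _ _ tendsto_id).const_mul_atBot hm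
  choose H hHr using hsurj
  obtain ⟨hh1, hHl, hH1, hHd⟩ := contDiff_one_of_rightInverse_real hkc hhd hkpos hHr
  have hH0 : H 0 = a := by rw [← hha]; exact hHl a
  have hHlip : ∀ z, |H z - a| ≤ m⁻¹ * |z| := fun z => by
    rw [inv_mul_eq_div, le_div_iff₀ hm]
    have hz := hHr z
    rcases le_total a (H z) with h1 | h1
    · have := hlow _ _ h1
      rw [abs_of_nonneg (by linarith)]
      rw [hz, hha] at this
      have := le_abs_self z; linarith
    · have := hlow _ _ h1
      rw [abs_of_nonpos (by linarith)]
      rw [hz, hha] at this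
      have := neg_abs_le z; linarith
  -- on the neighbourhood, `h w = (w - a) * E w`, since both sides have derivative `k`
  have hform : ∀ w, |w - a| ≤ s → h w = (w - a) * E w := by
    intro w hw
    have hD : ∀ y ∈ Icc (a - s) (a + s),
        HasDerivWithinAt (fun w => h w - (w - a) * E w) 0 (Icc (a - s) (a + s)) y := by
      intro y hy
      have hy' : |y - a| ≤ s := abs_le.2 ⟨by linarith [hy.1], by linarith [hy.2]⟩
      have h1 := (hhd y).sub (((hasDerivAt_id y).sub_const a).mul (hEd y))
      refine (h1.hasDerivWithinAt).congr_deriv ?_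
      have h2 := hg1ne y
      have h3 := hmul2 y
      simp only [k, q, id]
      rw [hclid y hy'] at h2 ⊢
      field_simp
      linear_combination E y * h3
    have hc := (convex_Icc (a - s) (a + s)).is_const_of_fderivWithin_eq_zero (𝕜 := ℝ)
      (f := fun w => h w - (w - a) * E w) (x := w) (y := a)
      (fun y hy => (hD y hy).differentiableWithinAt)
      (fun y hy => by
        have := (hD y hy).hasFDerivWithinAt.fderivWithin
          (uniqueDiffOn_Icc (by linarith : a - s < a + s) y hy)
        rw [this]; ext; simp)
      (by have := abs_le.1 hw; constructor <;> linarith) (by constructor <;> linarith)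
    simp only [hha, sub_self, zero_mul] at hc
    linarith
  -- the displacement primitive
  set b : ℝ → ℝ := fun z => deriv f (H z) - deriv f a
  have hfd : ContDiff ℝ 1 (deriv f) := contDiff_one_deriv hf
  have hb : ContDiff ℝ 1 b := (hfd.comp hH1).sub contDiff_const
  have hb1c : Continuous (dslope b 0) := continuous_dslope_of_differentiable hb.continuous
    (hb.differentiable (by simp) 0)
  set B : ℝ → ℝ := fun z => ∫ y in (0:ℝ)..z, dslope b 0 y
  have hBd : ∀ z, HasDerivAt B (dslope b 0 z) z := fun z =>
    hasDerivAt_primitive hb1c _ z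
  have hB1 : ContDiff ℝ 1 B := by
    rw [contDiff_one_iff_deriv]
    refine ⟨fun x => (hBd x).differentiableAt, ?_⟩
    rwa [funext fun x => (hBd x).deriv]
  set r := m * s
  have hr : 0 < r := by positivity
  obtain ⟨K, hK⟩ := (isCompact_Icc (a := -r) (b := r)).exists_bound_of_continuousOn
    hb1c.continuousOn
  refine ⟨h, H, B, max (max M m⁻¹) K, r, hh1, hH1, hB1, ?_, hr, hha, hHl, hH0, ?_, ?_, ?_, ?_, ?_⟩
  · exact lt_max_of_lt_left (lt_max_of_lt_right (by positivity))
  · intro w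
    rw [(hhd w).deriv, abs_of_pos (hkpos w)]
    exact (hMk w).trans ((le_max_left _ _).trans (le_max_left _ _))
  · intro z
    rw [(hHd z).deriv, abs_of_pos (inv_pos.2 (hkpos _))]
    exact (inv_anti₀ hm (hmk _)).trans ((le_max_right _ _).trans (le_max_left _ _))
  · intro z hz
    rw [(hBd z).deriv]
    exact (hK z (abs_le.1 hz)).trans (le_max_right _ _)
  · intro z hz
    have hHs : |H z - a| ≤ s := by
      refine (hHlip z).trans ?_
      calc m⁻¹ * |z| ≤ m⁻¹ * (m * s) := by gcongr
        _ = s := by field_simp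
    have h1 := hform _ hHs
    rw [hHr] at h1
    rw [(hHd z).deriv, ← hmul1 (H z)]
    have h2 := hg1ne (H z)
    have h3 := Real.exp_pos (∫ y in a..(H z), q y)
    have h4 : E (H z) ≠ 0 := h3.ne'
    simp only [k]
    rw [hclid _ hHs] at h2 ⊢
    rw [inv_div, div_mul_eq_mul_div, div_eq_iff (mul_ne_zero hg' h4)]
    linear_combination (g1 (H z) * l) * h1
  · intro z
    rw [(hBd z).deriv]
    have := sub_smul_dslope b 0 z
    have hb0 : b 0 = 0 := by simp [b, hH0]
    simp only [hb0, sub_zero, smul_eq_mul] at this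
    rw [mul_comm]; exact this

/-! ### Solutions by characteristics -/

/-- Global solvability of `ξ + R (t, ξ) = x` for `ξ`, with `C¹` dependence on `(t, x)`, when `R` is
bounded and a contraction in `ξ`. -/
lemma exists_implicit {R : ℝ × ℝ → ℝ} (hR : ContDiff ℝ 1 R) (hb : ∀ p, |R p| ≤ 1 / 2)
    (hd : ∀ t ξ, |deriv (fun y => R (t, y)) ξ| ≤ 1 / 2) :
    ∃ X : ℝ × ℝ → ℝ, ContDiff ℝ 1 X ∧ ∀ p, X p + R (p.1, X p) = p.2 := by
  have hRd : ∀ t, Differentiable ℝ fun y => R (t, y) := fun t =>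
    (hR.differentiable (by simp)).comp (by fun_prop)
  have hmono : ∀ t, StrictMono fun y => y + R (t, y) := fun t => by
    refine strictMono_of_deriv_pos fun y => ?_
    have h1 : HasDerivAt (fun y => y + R (t, y)) _ y :=
      (hasDerivAt_id' y).add (hRd t y).hasDerivAt
    rw [h1.deriv]
    have := (abs_le.1 (hd t y)).1
    linarith
  have hsurj : ∀ p : ℝ × ℝ, ∃ y, y + R (p.1, y) = p.2 := fun p => by
    have hc : Continuous fun y => y + R (p.1, y) := continuous_id.add (hRd p.1).continuous
    have := intermediate_value_Icc (show p.2 - 1 / 2 ≤ p.2 + 1 / 2 by linarith) hc.continuousOn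
    obtain ⟨y, -, hy⟩ := this (show p.2 ∈ Icc _ _ by
      have h1 := abs_le.1 (hb (p.1, p.2 - 1 / 2))
      have h2 := abs_le.1 (hb (p.1, p.2 + 1 / 2))
      constructor <;> linarith [h1.2, h2.1])
    exact ⟨y, hy⟩
  choose X hX using hsurj
  refine ⟨X, ?_, hX⟩
  set F : ℝ × ℝ → ℝ × ℝ := fun p => (p.1, p.2 + R p)
  have hF : ContDiff ℝ 1 F := contDiff_fst.prodMk (contDiff_snd.add hR)
  have hinj : Injective F := by
    rintro ⟨t, x⟩ ⟨t', x'⟩ h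
    simp only [F, Prod.mk.injEq] at h
    obtain ⟨rfl, h2⟩ := h
    rw [(hmono t).injective h2]
  have hinv : ContDiff ℝ 1 fun p : ℝ × ℝ => (p.1, X p) := by
    refine contDiff_one_of_rightInverse hF hinj (fun p => ?_) fun p => ?_
    · simp only [F, hX]
    · have h1 : HasFDerivAt F ((ContinuousLinearMap.fst ℝ ℝ ℝ).prod
          (ContinuousLinearMap.snd ℝ ℝ ℝ + fderiv ℝ R p)) p :=
        hasFDerivAt_fst.prodMk (hasFDerivAt_snd.add (hR.differentiable (by simp) p).hasFDerivAt)
      set D := (ContinuousLinearMap.fst ℝ ℝ ℝ).prod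
          (ContinuousLinearMap.snd ℝ ℝ ℝ + fderiv ℝ R p) with hD
      have hDinj : Injective D.toLinearMap := by
        rw [← LinearMap.ker_eq_bot, LinearMap.ker_eq_bot']
        rintro ⟨u, w⟩ huw
        simp only [hD, ContinuousLinearMap.coe_coe, ContinuousLinearMap.prod_apply,
          ContinuousLinearMap.coe_fst', _root_.add_apply,
          ContinuousLinearMap.coe_snd', Prod.mk_eq_zero] at huw
        obtain ⟨rfl, h2⟩ := huw
        have h3 : deriv (fun y => R (p.1, y)) p.2 = fderiv ℝ R p (0, 1) := by
          have hp : HasFDerivAt R (fderiv ℝ R p) (p.1, p.2) :=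
            (hR.differentiable (by simp) p).hasFDerivAt
          have hline : HasDerivAt (fun y : ℝ => (p.1, y)) ((0 : ℝ), (1 : ℝ)) p.2 :=
            (hasDerivAt_const p.2 p.1).prodMk (hasDerivAt_id p.2)
          exact (hp.comp_hasDerivAt p.2 hline).deriv
        have h4 : fderiv ℝ R p (0, w) = w * fderiv ℝ R p (0, 1) := by
          rw [← smul_eq_mul, ← map_smul]; simp
        rw [h4, ← h3] at h2
        have h5 := abs_le.1 (hd p.1 p.2)
        have h6 : w * (1 + deriv (fun y => R (p.1, y)) p.2) = 0 := by linarith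
        rcases mul_eq_zero.1 h6 with h7 | h7
        · rw [h7]; rfl
        · linarith [h5.1]
      refine ⟨(LinearEquiv.ofInjectiveEndo D.toLinearMap hDinj).toContinuousLinearEquiv, ?_⟩
      convert! h1 using 1
  exact contDiff_snd.comp hinv

/-- A 1-Lipschitz function that is the identity on `[0, ∞)` and bounded below by `-1`. -/
lemma exists_clamp : ∃ χ : ℝ → ℝ, ContDiff ℝ 1 χ ∧ (∀ x, |deriv χ x| ≤ 1) ∧ (∀ x, -1 ≤ χ x) ∧
    ∀ x, 0 ≤ x → χ x = x ∧ HasDerivAt χ 1 x := by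
  have hc : Continuous fun y : ℝ => Real.exp (min y 0) := by fun_prop
  set χ : ℝ → ℝ := fun x => ∫ y in (0:ℝ)..x, Real.exp (min y 0) with hχ
  have hd : ∀ x, HasDerivAt χ (Real.exp (min x 0)) x := fun x => hasDerivAt_primitive hc 0 x
  refine ⟨χ, ?_, ?_, ?_, ?_⟩
  · rw [contDiff_one_iff_deriv]
    exact ⟨fun x => (hd x).differentiableAt, by rwa [funext fun x => (hd x).deriv]⟩
  · intro x
    rw [(hd x).deriv, abs_of_pos (Real.exp_pos _), Real.exp_le_one_iff]
    exact min_le_right _ _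
  · intro x
    rcases le_total 0 x with hx | hx
    · have : 0 ≤ χ x := intervalIntegral.integral_nonneg hx fun y _ => (Real.exp_pos _).le
      linarith
    · have : χ x = ∫ y in (0:ℝ)..x, Real.exp y := by
        refine intervalIntegral.integral_congr fun y hy => ?_
        rw [uIcc_of_ge hx] at hy
        simp only [min_eq_left hy.2]
      rw [this, integral_exp, Real.exp_zero]
      linarith [Real.exp_pos x]
  · intro x hx
    constructor
    · have : χ x = ∫ y in (0:ℝ)..x, (1:ℝ) := by
        refine intervalIntegral.integral_congr fun y hy => ?_
        rw [uIcc_of_le hx] at hy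
        simp only [min_eq_right hy.1, Real.exp_zero]
      rw [this]; simp
    · have := hd x
      rwa [min_eq_right hx, Real.exp_zero] at this

/-- Solution by characteristics of `v_t + (f v)_x - σ v_x = g v` near the equilibrium `a`. In the
linearizing coordinate the characteristic issued from `x₀` carries `exp (λ t) * y₀ x₀`, and at time
`t` it sits at `ξ + (B (exp (λ t) * y₀ x₀) - B (y₀ x₀)) / λ`, where `x₀ = c t + ξ` and `ξ` is
called the label. The reparametrizations `χ` of time and `χ₁` of labels make the formula global
while leaving it a solution where both are the identity. The function `X` gives the label of the
characteristic through `(t, x)`. -/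
lemma exists_family {f g h H B : ℝ → ℝ} {a L r σ c : ℝ} (LC : LinCoord f g a h H B L r)
    (hc : c = σ - deriv f a) (hl : deriv g a ≠ 0) {χ χ₁ y₀ : ℝ → ℝ} (hχ : ContDiff ℝ 1 χ)
    (hχ₁ : ContDiff ℝ 1 χ₁) (hχ0 : χ 0 = 0) (hχ₁' : ∀ x, |deriv χ₁ x| ≤ 1)
    (hy₀ : ContDiff ℝ 1 y₀) {ε : ℝ} (hεr : ε ≤ r) (hεl : 4 * (L * ε) ≤ |deriv g a|)
    (hy : ∀ x, |y₀ x| ≤ ε) (hy' : ∀ x, |deriv y₀ x| ≤ ε)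
    (hz : ∀ t ξ, Real.exp (deriv g a * χ t) * |y₀ (c * χ t + χ₁ ξ)| ≤ ε)
    (hz' : ∀ t ξ, Real.exp (deriv g a * χ t) * |deriv y₀ (c * χ t + χ₁ ξ)| ≤ ε) :
    ∃ v X : ℝ → ℝ → ℝ, ContDiff ℝ 1 (uncurry v) ∧ (∀ t x, |X t x - x| ≤ 1 / 2) ∧
      (∀ x, v 0 x = H (y₀ (χ₁ x))) ∧
      (∀ t x, |v t x - a| ≤ L * (Real.exp (deriv g a * χ t) * |y₀ (c * χ t + χ₁ (X t x))|)) ∧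
      (∀ t x, |deriv (v t) x| ≤
        2 * L * (Real.exp (deriv g a * χ t) * |deriv y₀ (c * χ t + χ₁ (X t x))|)) ∧
      (∀ t x, HasDerivAt χ 1 t → χ t = t → HasDerivAt χ₁ 1 (X t x) →
        deriv (fun s => v s x) t + (deriv f (v t x) - σ) * deriv (v t) x = g (v t x)) := by
  set l := deriv g a with hldef
  have hL := LC.Lpos
  have hlpos : 0 < |l| := abs_pos.2 hl
  have hε0 : 0 ≤ ε := (abs_nonneg _).trans (hy 0)
  have hBd : ∀ z, HasDerivAt B (deriv B z) z := fun z =>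
    (LC.hB.differentiable (by simp) z).hasDerivAt
  have hHd : ∀ z, HasDerivAt H (deriv H z) z := fun z =>
    (LC.hH.differentiable (by simp) z).hasDerivAt
  have hyd : ∀ z, HasDerivAt y₀ (deriv y₀ z) z := fun z =>
    (hy₀.differentiable (by simp) z).hasDerivAt
  have hχ₁d : ∀ z, HasDerivAt χ₁ (deriv χ₁ z) z := fun z =>
    (hχ₁.differentiable (by simp) z).hasDerivAt
  set y : ℝ × ℝ → ℝ := fun p => y₀ (c * χ p.1 + χ₁ p.2) with hydef
  set z : ℝ × ℝ → ℝ := fun p => Real.exp (l * χ p.1) * y p with hzdef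
  have hyC : ContDiff ℝ 1 y := hy₀.comp
    ((contDiff_const.mul (hχ.comp contDiff_fst)).add (hχ₁.comp contDiff_snd))
  have hzC : ContDiff ℝ 1 z :=
    (contDiff_const.mul (hχ.comp contDiff_fst)).exp.mul hyC
  have hzb : ∀ p, |z p| ≤ ε := fun p => by
    simp only [hzdef, abs_mul, Real.abs_exp]; exact hz _ _
  have hyb : ∀ p, |y p| ≤ ε := fun p => hy _
  have hBL : ∀ p, |B (z p) - B (y p)| ≤ L * (2 * ε) := fun p => by
    have := (convex_Icc (-r) r).norm_image_sub_le_of_norm_deriv_le (f := B) (C := L)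
      (fun x _ => (hBd x).differentiableAt) (fun x hx => LC.dB x (abs_le.2 hx))
      (abs_le.1 ((hyb p).trans hεr)) (abs_le.1 ((hzb p).trans hεr))
    refine this.trans ?_
    gcongr
    calc ‖z p - y p‖ ≤ |z p| + |y p| := abs_sub _ _
      _ ≤ 2 * ε := by linarith [hzb p, hyb p]
  set R : ℝ × ℝ → ℝ := fun p => (B (z p) - B (y p)) / l with hRdef
  have hRC : ContDiff ℝ 1 R := ((LC.hB.comp hzC).sub (LC.hB.comp hyC)).div_const _
  have hRb : ∀ p, |R p| ≤ 1 / 2 := fun p => by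
    simp only [hRdef, abs_div]
    rw [div_le_iff₀ hlpos]
    linarith [hBL p]
  -- derivative of `R` along a curve of labels at fixed time
  have hA : ∀ t ξ, |(deriv B (z (t, ξ)) * Real.exp (l * χ t) - deriv B (y (t, ξ))) *
      deriv y₀ (c * χ t + χ₁ ξ) / l| ≤ 1 / 2 := fun t ξ => by
    rw [abs_div, div_le_iff₀ hlpos]
    have e1 : (deriv B (z (t, ξ)) * Real.exp (l * χ t) - deriv B (y (t, ξ))) *
      deriv y₀ (c * χ t + χ₁ ξ) = deriv B (z (t, ξ)) * (Real.exp (l * χ t) *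
        deriv y₀ (c * χ t + χ₁ ξ)) - deriv B (y (t, ξ)) * deriv y₀ (c * χ t + χ₁ ξ) := by ring
    rw [e1]
    have h1 : |deriv B (z (t, ξ)) * (Real.exp (l * χ t) * deriv y₀ (c * χ t + χ₁ ξ))|
        ≤ L * ε := by
      rw [abs_mul, abs_mul, Real.abs_exp]
      exact mul_le_mul (LC.dB _ ((hzb _).trans hεr)) (hz' _ _) (by positivity) hL.le
    have h2 : |deriv B (y (t, ξ)) * deriv y₀ (c * χ t + χ₁ ξ)| ≤ L * ε := by
      rw [abs_mul]
      exact mul_le_mul (LC.dB _ ((hyb _).trans hεr)) (hy' _) (by positivity) hL.le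
    have h3 := abs_sub (deriv B (z (t, ξ)) * (Real.exp (l * χ t) * deriv y₀ (c * χ t + χ₁ ξ)))
      (deriv B (y (t, ξ)) * deriv y₀ (c * χ t + χ₁ ξ))
    linarith
  have hRd : ∀ t ξ, HasDerivAt (fun y => R (t, y))
      ((deriv B (z (t, ξ)) * Real.exp (l * χ t) - deriv B (y (t, ξ))) *
      deriv y₀ (c * χ t + χ₁ ξ) / l * deriv χ₁ ξ) ξ := fun t ξ => by
    have hy1 : HasDerivAt (fun x => y (t, x)) (deriv y₀ (c * χ t + χ₁ ξ) * deriv χ₁ ξ) ξ :=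
      (hyd (c * χ t + χ₁ ξ)).comp ξ ((hχ₁d ξ).const_add (c * χ t))
    have hz1 : HasDerivAt (fun x => z (t, x))
        (Real.exp (l * χ t) * (deriv y₀ (c * χ t + χ₁ ξ) * deriv χ₁ ξ)) ξ :=
      hy1.const_mul (Real.exp (l * χ t))
    have hB1 := (hBd (z (t, ξ))).comp ξ hz1
    have hB2 := (hBd (y (t, ξ))).comp ξ hy1
    refine ((hB1.sub hB2).div_const l).congr_deriv ?_
    ring
  obtain ⟨X, hXC, hX⟩ := exists_implicit hRC hRb fun t ξ => by
    rw [(hRd t ξ).deriv, abs_mul]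
    calc _ ≤ (1 / 2 : ℝ) * 1 := mul_le_mul (hA t ξ) (hχ₁' ξ) (abs_nonneg _) (by norm_num)
      _ = 1 / 2 := by norm_num
  have hvC : ContDiff ℝ 1 fun p : ℝ × ℝ => H (z (p.1, X p)) :=
    LC.hH.comp (hzC.comp (contDiff_fst.prodMk hXC))
  have hXt : ∀ t x, HasDerivAt (fun s => X (s, x)) (deriv (fun s => X (s, x)) t) t := fun t x =>
    DifferentiableAt.hasDerivAt
      (((hXC.differentiable (by simp)).comp (by fun_prop) : Differentiable ℝ fun s => X (s, x)) t)
  have hXx : ∀ t x, HasDerivAt (fun s => X (t, s)) (deriv (fun s => X (t, s)) x) x := fun t x =>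
    DifferentiableAt.hasDerivAt
      (((hXC.differentiable (by simp)).comp (by fun_prop) : Differentiable ℝ fun s => X (t, s)) x)
  have hvx : ∀ t x, HasDerivAt (fun x => H (z (t, X (t, x))))
      (deriv H (z (t, X (t, x))) * (Real.exp (l * χ t) * (deriv y₀ (c * χ t + χ₁ (X (t, x))) *
        (deriv χ₁ (X (t, x)) * deriv (fun s => X (t, s)) x)))) x := fun t x =>
    (hHd _).comp x (((hyd (c * χ t + χ₁ (X (t, x)))).comp x
      (((hχ₁d (X (t, x))).comp x (hXx t x)).const_add (c * χ t))).const_mul (Real.exp (l * χ t)))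
  -- differentiating `X + R (t, X) = x` in `x`
  have hXx1 : ∀ t x, deriv (fun s => X (t, s)) x *
      (1 + (deriv B (z (t, X (t, x))) * Real.exp (l * χ t) - deriv B (y (t, X (t, x)))) *
      deriv y₀ (c * χ t + χ₁ (X (t, x))) / l * deriv χ₁ (X (t, x))) = 1 := fun t x => by
    have h1 : HasDerivAt (fun s => X (t, s) + R (t, X (t, s))) _ x :=
      (hXx t x).add (HasDerivAt.comp (h₂ := fun y => R (t, y)) (h := fun s => X (t, s)) x
        (hRd t (X (t, x))) (hXx t x))
    have h2 : (fun s => X (t, s) + R (t, X (t, s))) = fun s => s := funext fun s => hX (t, s)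
    rw [h2] at h1
    have := h1.unique (hasDerivAt_id' x)
    linear_combination this
  refine ⟨fun t x => H (z (t, X (t, x))), fun t x => X (t, x), hvC, ?_, ?_, ?_, ?_, ?_⟩
  · intro t x
    have h1 := hX (t, x)
    have h2 : X (t, x) - x = -R (t, X (t, x)) := by simp only at h1; linarith
    simp only [h2, abs_neg]; exact hRb _
  · intro x
    have h1 := hX (0, x)
    have h2 : R (0, X (0, x)) = 0 := by simp [hRdef, hzdef, hχ0]
    simp only [h2, add_zero] at h1
    simp only [h1, hzdef, hydef, hχ0]; simp
  · intro t x
    have := convex_univ.norm_image_sub_le_of_norm_deriv_le (f := H) (C := L)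
      (fun x _ => (hHd x).differentiableAt) (fun x _ => LC.dH x)
      (mem_univ 0) (mem_univ (z (t, X (t, x))))
    rw [LC.H_zero, sub_zero] at this
    refine this.trans (le_of_eq ?_)
    simp only [hzdef, hydef, Real.norm_eq_abs, abs_mul, Real.abs_exp]
  · intro t x
    rw [(hvx t x).deriv]
    have h1 := hXx1 t x
    set A := (deriv B (z (t, X (t, x))) * Real.exp (l * χ t) - deriv B (y (t, X (t, x)))) *
      deriv y₀ (c * χ t + χ₁ (X (t, x))) / l with hAdef
    have hA1 : |A| ≤ 1 / 2 := hA t (X (t, x))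
    have hq : |deriv (fun s => X (t, s)) x| ≤ 2 := by
      have h3 : |A * deriv χ₁ (X (t, x))| ≤ 1 / 2 := by
        rw [abs_mul]
        calc _ ≤ (1 / 2 : ℝ) * 1 := mul_le_mul hA1 (hχ₁' _) (abs_nonneg _) (by norm_num)
          _ = 1 / 2 := by norm_num
      have h4 := (abs_le.1 h3).1
      have h5 : |deriv (fun s => X (t, s)) x| * |1 + A * deriv χ₁ (X (t, x))| = 1 := by
        rw [← abs_mul, h1, abs_one]
      have h6 : 1 / 2 ≤ |1 + A * deriv χ₁ (X (t, x))| := le_trans (by linarith) (le_abs_self _)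
      nlinarith [abs_nonneg (deriv (fun s => X (t, s)) x)]
    simp only [abs_mul, Real.abs_exp]
    have h7 : |deriv χ₁ (X (t, x))| * |deriv (fun s => X (t, s)) x| ≤ 2 := by
      calc _ ≤ (1 : ℝ) * 2 := mul_le_mul (hχ₁' _) hq (abs_nonneg _) (by norm_num)
        _ = 2 := by norm_num
    calc |deriv H (z (t, X (t, x)))| * (Real.exp (l * χ t) *
          (|deriv y₀ (c * χ t + χ₁ (X (t, x)))| * (|deriv χ₁ (X (t, x))| *
          |deriv (fun s => X (t, s)) x|)))
        ≤ L * (Real.exp (l * χ t) * (|deriv y₀ (c * χ t + χ₁ (X (t, x)))| * 2)) := by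
          gcongr
          exact LC.dH _
      _ = _ := by ring
  · intro t x hχt hχtt hχ₁t
    have hD1 : deriv χ₁ (X (t, x)) = 1 := hχ₁t.deriv
    have h1 := hXx1 t x
    have hy1 : HasDerivAt (fun s => y (s, X (s, x))) (deriv y₀ (c * χ t + χ₁ (X (t, x))) *
        (c * 1 + 1 * deriv (fun s => X (s, x)) t)) t :=
      (hyd _).comp t ((hχt.const_mul c).add
        (HasDerivAt.comp (h₂ := χ₁) (h := fun s => X (s, x)) t hχ₁t (hXt t x)))
    have hz1 : HasDerivAt (fun s => z (s, X (s, x))) _ t := ((hχt.const_mul l).exp).mul hy1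
    have hv1 : HasDerivAt (fun s => H (z (s, X (s, x)))) _ t := (hHd _).comp t hz1
    have hR1 : HasDerivAt (fun s => X (s, x) + R (s, X (s, x))) _ t :=
      (hXt t x).add ((((hBd _).comp t hz1).sub ((hBd _).comp t hy1)).div_const l)
    have h2 : (fun s => X (s, x) + R (s, X (s, x))) = fun s => x := funext fun s => hX (s, x)
    rw [h2] at hR1
    have h3 := hR1.unique (hasDerivAt_const t x)
    rw [hv1.deriv, (hvx t x).deriv, hD1]
    rw [hD1] at h1
    have h4 := LC.lin (z (t, X (t, x))) ((hzb _).trans hεr)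
    have h5 := LC.disp (z (t, X (t, x)))
    rw [← hldef] at h4
    have hzz : z (t, X (t, x)) = Real.exp (l * χ t) * y (t, X (t, x)) := rfl
    rw [← h4]
    have h6 : deriv f (H (z (t, X (t, x)))) =
        deriv B (z (t, X (t, x))) * z (t, X (t, x)) + deriv f a := by
      linarith
    simp only [h6]
    generalize deriv H (z (t, X (t, x))) = dH at *
    generalize deriv B (z (t, X (t, x))) = dB at *
    generalize deriv B (y (t, X (t, x))) = dBy at *
    generalize deriv y₀ (c * χ t + χ₁ (X (t, x))) = dy at *
    generalize z (t, X (t, x)) = zz at *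
    generalize y (t, X (t, x)) = yy at *
    generalize Real.exp (l * χ t) = e at *
    generalize deriv (fun s => X (t, s)) x = q at *
    generalize deriv (fun s => X (s, x)) t = p at *
    -- `p + c = (c - b) q` with `b = dB * zz`
    have hq : q * (l + (dB * e - dBy) * dy) = l := by
      field_simp at h1; linear_combination h1
    have h3' : p * l + (dB * (l * zz) + (dB * e - dBy) * dy * (c + p)) = 0 := by
      field_simp at h3
      rw [hzz]
      linear_combination h3
    have key : (p + c - (c - dB * zz) * q) = 0 := by
      have : l * (p + c - (c - dB * zz) * q) = 0 := by
        linear_combination q * h3' - (p + c) * hq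
      exact (mul_eq_zero.1 this).resolve_left hl
    rw [hzz] at key ⊢
    linear_combination (dH * e * dy) * key + dH * e * dy * q * hc

/-! ### Extension of the data from a half line -/

/-- The solution by characteristics with data `a + W`, with bounds in terms of the value of `W`
and `W'` at the foot `c * χ t + χ₁ (X t x)` of the characteristic through `(t, x)`. -/
lemma exists_half {f g : ℝ → ℝ} (hf : ContDiff ℝ (⊤ : ℕ∞) f) (hg : ContDiff ℝ (⊤ : ℕ∞) g)
    {a σ c : ℝ} (hga : g a = 0) (hl : deriv g a ≠ 0) (hc : c = σ - deriv f a) :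
    ∃ K > (0:ℝ), ∃ δ > (0:ℝ), ∀ χ χ₁ W : ℝ → ℝ, ContDiff ℝ 1 χ → ContDiff ℝ 1 χ₁ → χ 0 = 0 →
      (∀ x, |deriv χ₁ x| ≤ 1) → ContDiff ℝ 1 W → ∀ ε ≤ δ, (∀ x, |W x| ≤ ε) →
      (∀ x, |deriv W x| ≤ ε) →
      (∀ t ξ, Real.exp (deriv g a * χ t) * |W (c * χ t + χ₁ ξ)| ≤ ε) →
      (∀ t ξ, Real.exp (deriv g a * χ t) * |deriv W (c * χ t + χ₁ ξ)| ≤ ε) →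
      ∃ v X : ℝ → ℝ → ℝ, ContDiff ℝ 1 (uncurry v) ∧ (∀ t x, |X t x - x| ≤ 1 / 2) ∧
        (∀ x, v 0 x = a + W (χ₁ x)) ∧
        (∀ t x, |v t x - a| ≤ K * (Real.exp (deriv g a * χ t) * |W (c * χ t + χ₁ (X t x))|)) ∧
        (∀ t x, |deriv (v t) x| ≤
          K * (Real.exp (deriv g a * χ t) * |deriv W (c * χ t + χ₁ (X t x))|)) ∧
        (∀ t x, HasDerivAt χ 1 t → χ t = t → HasDerivAt χ₁ 1 (X t x) →
          deriv (fun s => v s x) t + (deriv f (v t x) - σ) * deriv (v t) x = g (v t x)) := by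
  obtain ⟨h, H, B, L, r, LC⟩ := exists_linCoord hf hg hga hl
  have hL := LC.Lpos
  have hr := LC.rpos
  have hlpos : 0 < |deriv g a| := abs_pos.2 hl
  refine ⟨2 * L * L, by positivity, min (r / L) (|deriv g a| / (4 * L * L)),
    lt_min (by positivity) (by positivity), ?_⟩
  intro χ χ₁ W hχ hχ₁ hχ0 hχ₁' hW ε hε hWb hWb' hz hz'
  have hε1 : L * ε ≤ r := by
    have := hε.trans (min_le_left _ _)
    rw [le_div_iff₀ hL] at this; linarith
  have hε2 : 4 * (L * (L * ε)) ≤ |deriv g a| := by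
    have := hε.trans (min_le_right _ _)
    rw [le_div_iff₀ (by positivity)] at this; linarith
  have hhd : ∀ z, HasDerivAt h (deriv h z) z := fun z =>
    (LC.hh.differentiable (by simp) z).hasDerivAt
  have hWd : ∀ z, HasDerivAt W (deriv W z) z := fun z =>
    (hW.differentiable (by simp) z).hasDerivAt
  set y₀ : ℝ → ℝ := fun x => h (a + W x) with hy₀
  have hy₀C : ContDiff ℝ 1 y₀ := LC.hh.comp (contDiff_const.add hW)
  have hb : ∀ x, |y₀ x| ≤ L * |W x| := fun x => by
    have := convex_univ.norm_image_sub_le_of_norm_deriv_le (f := h) (C := L)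
      (fun x _ => (hhd x).differentiableAt) (fun x _ => LC.dh x)
      (mem_univ a) (mem_univ (a + W x))
    simpa [LC.h_eq] using this
  have hb' : ∀ x, |deriv y₀ x| ≤ L * |deriv W x| := fun x => by
    have : HasDerivAt y₀ (deriv h (a + W x) * deriv W x) x :=
      (hhd _).comp x ((hWd x).const_add a)
    rw [this.deriv, abs_mul]
    exact mul_le_mul_of_nonneg_right (LC.dh _) (abs_nonneg _)
  have mv : ∀ {e p q : ℝ}, 0 ≤ e → p ≤ L * q → e * q ≤ ε → e * p ≤ L * ε := fun {e p q} h0 h1 h2 =>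
    calc e * p ≤ e * (L * q) := mul_le_mul_of_nonneg_left h1 h0
      _ = L * (e * q) := by ring
      _ ≤ L * ε := mul_le_mul_of_nonneg_left h2 hL.le
  obtain ⟨v, X, h1, h2, h3, h4, h5, h6⟩ := exists_family LC hc hl hχ hχ₁ hχ0 hχ₁' hy₀C hε1 hε2
    (fun x => (hb x).trans (mul_le_mul_of_nonneg_left (hWb x) hL.le))
    (fun x => (hb' x).trans (mul_le_mul_of_nonneg_left (hWb' x) hL.le))
    (fun t ξ => mv (Real.exp_pos _).le (hb _) (hz t ξ))
    (fun t ξ => mv (Real.exp_pos _).le (hb' _) (hz' t ξ))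
  refine ⟨v, X, h1, h2, fun x => by rw [h3, hy₀]; exact LC.H_h _, fun t x => ?_, fun t x => ?_, h6⟩
  · refine (h4 t x).trans ?_
    have e1 : 0 ≤ L * (L * (Real.exp (deriv g a * χ t) * |W (c * χ t + χ₁ (X t x))|)) := by
      positivity
    calc _ ≤ L * (Real.exp (deriv g a * χ t) * (L * |W (c * χ t + χ₁ (X t x))|)) := by
          gcongr; exact hb _
      _ ≤ _ := by nlinarith
  · refine (h5 t x).trans ?_
    calc _ ≤ 2 * L * (Real.exp (deriv g a * χ t) * (L * |deriv W (c * χ t + χ₁ (X t x))|)) := by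
          gcongr; exact hb' _
      _ = _ := by ring

/-- A `C¹` function on the open half line that has, with its derivative, limits at `0` extends to a
`C¹` function on the line, by `p₀ + p₁ sin x` on the other side. -/
lemma exists_extension {w : ℝ → ℝ} (hw : ContDiffOn ℝ 1 w (Ioi 0)) {p₀ p₁ : ℝ}
    (h0 : Tendsto w (nhdsWithin 0 (Ioi 0)) (nhds p₀))
    (h1 : Tendsto (deriv w) (nhdsWithin 0 (Ioi 0)) (nhds p₁)) :
    ∃ W : ℝ → ℝ, ContDiff ℝ 1 W ∧ (∀ x, 0 < x → W x = w x ∧ deriv W x = deriv w x) ∧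
      ∀ x ≤ 0, W x = p₀ + p₁ * Real.sin x ∧ deriv W x = p₁ * Real.cos x := by
  have hwd : ∀ x, 0 < x → HasDerivAt w (deriv w x) x := fun x hx =>
    ((hw.differentiableOn (by simp)).differentiableAt (Ioi_mem_nhds hx)).hasDerivAt
  have hdc : ContinuousOn (deriv w) (Ioi 0) := hw.continuousOn_deriv_of_isOpen isOpen_Ioi le_rfl
  set d : ℝ → ℝ := fun x => if x ≤ 0 then p₁ * Real.cos x else deriv w x with hd
  have hd0 : d 0 = p₁ := by simp [hd]
  have hdcont : Continuous d := by
    rw [continuous_iff_continuousAt]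
    intro x
    rcases lt_trichotomy x 0 with hx | rfl | hx
    · have : (fun x => p₁ * Real.cos x) =ᶠ[nhds x] d := by
        filter_upwards [Iio_mem_nhds hx] with y hy
        simp only [hd, if_pos (mem_Iio.1 hy).le]
      exact ContinuousAt.congr (by fun_prop) this
    · rw [continuousAt_iff_continuous_left'_right']
      constructor
      · have : ContinuousWithinAt (fun x => p₁ * Real.cos x) (Iio 0) 0 := by fun_prop
        refine this.congr (fun y hy => ?_) ?_
        · simp only [hd, if_pos (mem_Iio.1 hy).le]
        · simp [hd]
      · rw [ContinuousWithinAt, hd0]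
        refine h1.congr' ?_
        filter_upwards [self_mem_nhdsWithin] with y hy
        simp only [hd, if_neg (not_le.2 (mem_Ioi.1 hy))]
    · have : deriv w =ᶠ[nhds x] d := by
        filter_upwards [Ioi_mem_nhds hx] with y hy
        simp only [hd, if_neg (not_le.2 (mem_Ioi.1 hy))]
      exact (hdc.continuousAt (Ioi_mem_nhds hx)).congr this
  set W : ℝ → ℝ := fun x => p₀ + ∫ y in (0:ℝ)..x, d y with hW
  have hWd : ∀ x, HasDerivAt W (d x) x := fun x => (hasDerivAt_primitive hdcont 0 x).const_add p₀
  refine ⟨W, ?_, fun x hx => ⟨?_, ?_⟩, fun x hx => ⟨?_, ?_⟩⟩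
  · rw [contDiff_one_iff_deriv]
    exact ⟨fun x => (hWd x).differentiableAt, by rwa [funext fun x => (hWd x).deriv]⟩
  · have hD : ∀ y ∈ Ioi (0:ℝ), HasDerivAt (fun y => W y - w y) 0 y := fun y hy => by
      refine ((hWd y).sub (hwd y hy)).congr_deriv ?_
      simp only [hd, if_neg (not_le.2 (mem_Ioi.1 hy)), sub_self]
    have hcst : ∀ y ∈ Ioi (0:ℝ), W y - w y = W x - w x := fun y hy =>
      isOpen_Ioi.is_const_of_deriv_eq_zero isPreconnected_Ioi
        (fun z hz => (hD z hz).differentiableAt.differentiableWithinAt)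
        (fun z hz => (hD z hz).deriv) hy hx
    have hlim : Tendsto (fun y => W y - w y) (nhdsWithin 0 (Ioi 0)) (nhds (W 0 - p₀)) :=
      ((hWd 0).continuousAt.tendsto.mono_left nhdsWithin_le_nhds).sub h0
    have hlim2 : Tendsto (fun y => W y - w y) (nhdsWithin 0 (Ioi 0)) (nhds (W x - w x)) := by
      refine tendsto_const_nhds.congr' ?_
      filter_upwards [self_mem_nhdsWithin] with y hy
      exact (hcst y hy).symm
    have := tendsto_nhds_unique hlim hlim2
    simp only [hW, intervalIntegral.integral_same, add_zero, sub_self] at this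
    simp only [hW]
    linarith
  · rw [(hWd x).deriv, hd]; simp only [if_neg (not_le.2 hx)]
  · have : ∫ y in (0:ℝ)..x, d y = ∫ y in (0:ℝ)..x, p₁ * Real.cos y := by
      refine intervalIntegral.integral_congr fun y hy => ?_
      rw [uIcc_of_ge hx] at hy
      simp only [hd, if_pos hy.2]
    simp only [hW, this, intervalIntegral.integral_const_mul, integral_cos, Real.sin_zero, sub_zero]
  · rw [(hWd x).deriv, hd]; simp only [if_pos hx]

/-- One-sided limits at `0` exist for functions uniformly continuous relative to a weight. -/
lemma exists_lim_of_quot {w Q : ℝ → ℝ} (hQ : Antitone Q) (hQpos : ∀ x, 0 < Q x)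
    (hu : UniformContinuousOn (fun x => w x / Q x) (Ioi 0)) :
    ∃ p, Tendsto w (nhdsWithin 0 (Ioi 0)) (nhds p) := by
  have hQlim := hQ.tendsto_nhdsGT 0
  have hC : Cauchy (map (fun x => w x / Q x) (nhdsWithin 0 (Ioi 0))) :=
    ((cauchy_nhds (a := (0:ℝ))).mono nhdsWithin_le_nhds).map_of_le hu
      (by rw [nhdsWithin]; exact inf_le_right)
  obtain ⟨q, hq⟩ := CompleteSpace.complete hC
  refine ⟨_, (Tendsto.mul (f := fun x => w x / Q x) hq hQlim).congr fun x => ?_⟩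
  exact div_mul_cancel₀ _ (hQpos x).ne'

/-- Data given on the open half line extend to the whole line at the cost of a factor `2` in
the weighted bounds. -/
lemma exists_data {w Q : ℝ → ℝ} {E : ℝ} (hw : ContDiffOn ℝ 1 w (Ioi 0)) (hQ : Antitone Q)
    (hQpos : ∀ x, 0 < Q x) (hQ0 : ∀ x ≤ 0, Q x = Q 0)
    (hu : UniformContinuousOn (fun x => w x / Q x) (Ioi 0))
    (hu' : UniformContinuousOn (fun x => deriv w x / Q x) (Ioi 0))
    (hb : ∀ x, 0 < x → max |w x| |deriv w x| ≤ E * Q x) :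
    ∃ W : ℝ → ℝ, ContDiff ℝ 1 W ∧ (∀ x, 0 < x → W x = w x) ∧
      ∀ x, |W x| ≤ 2 * E * Q x ∧ |deriv W x| ≤ 2 * E * Q x := by
  obtain ⟨p₀, h0⟩ := exists_lim_of_quot hQ hQpos hu
  obtain ⟨p₁, h1⟩ := exists_lim_of_quot hQ hQpos hu'
  obtain ⟨W, hW, hWp, hWn⟩ := exists_extension hw h0 h1
  have hE : 0 ≤ E := by
    have := (abs_nonneg _).trans ((le_max_left _ _).trans (hb 1 one_pos))
    exact nonneg_of_mul_nonneg_left this (hQpos 1)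
  have hbd : ∀ x ∈ Ioi (0:ℝ), |w x| ≤ E * Q 0 ∧ |deriv w x| ≤ E * Q 0 := fun x hx => by
    have h2 := hb x hx
    have h3 : E * Q x ≤ E * Q 0 := mul_le_mul_of_nonneg_left (hQ (le_of_lt hx)) hE
    exact ⟨(le_max_left _ _).trans (h2.trans h3), (le_max_right _ _).trans (h2.trans h3)⟩
  have hp₀ : |p₀| ≤ E * Q 0 := le_of_tendsto h0.abs (by
    filter_upwards [self_mem_nhdsWithin] with x hx using (hbd x hx).1)
  have hp₁ : |p₁| ≤ E * Q 0 := le_of_tendsto h1.abs (by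
    filter_upwards [self_mem_nhdsWithin] with x hx using (hbd x hx).2)
  refine ⟨W, hW, fun x hx => (hWp x hx).1, fun x => ?_⟩
  have hEQ : 0 ≤ E * Q x := mul_nonneg hE (hQpos x).le
  rcases le_or_gt x 0 with hx | hx
  · rw [(hWn x hx).1, (hWn x hx).2, hQ0 x hx]
    have h4 : |p₁ * Real.sin x| ≤ E * Q 0 := by
      rw [abs_mul]
      nlinarith [Real.abs_sin_le_one x, abs_nonneg p₁]
    have h5 : |p₁ * Real.cos x| ≤ E * Q 0 := by
      rw [abs_mul]
      nlinarith [Real.abs_cos_le_one x, abs_nonneg p₁]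
    have h6 := abs_add_le p₀ (p₁ * Real.sin x)
    have : 0 ≤ |p₀| := abs_nonneg _
    constructor <;> linarith
  · rw [(hWp x hx).1, (hWp x hx).2]
    have := hb x hx
    have h7 := le_max_left |w x| |deriv w x|
    have h8 := le_max_right |w x| |deriv w x|
    constructor <;> linarith

/-! ### Decay of the two one-sided solutions -/

/-- The growth `exp (κ c τ)` is compensated by the weight at a point to the right of
`c τ + y - 2`. -/
lemma exp_mul_weight_le {ρ : ℝ → ℝ} (hρ : IsSubExpWeight ρ) {κ c τ x y : ℝ} (hκ : 0 ≤ κ)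
    (hy : 0 ≤ y) (hx : c * τ + y - 2 ≤ x) :
    Real.exp (κ * c * τ) * (ρ (max x 0) * Real.exp (-(κ * max x 0))) ≤
      Real.exp (2 * κ) * Real.exp (-(κ * y)) * ρ (max (c * τ - 2) 0) := by
  have h1 : ρ (max x 0) ≤ ρ (max (c * τ - 2) 0) :=
    hρ.2.1 _ _ (le_max_right _ _) (max_le_max (by linarith) le_rfl)
  have h2 : Real.exp (κ * c * τ) * Real.exp (-(κ * max x 0)) ≤
      Real.exp (2 * κ) * Real.exp (-(κ * y)) := by
    rw [← Real.exp_add, ← Real.exp_add, Real.exp_le_exp]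
    have := mul_le_mul_of_nonneg_left (hx.trans (le_max_left x 0)) hκ
    nlinarith
  have h3 : 0 < ρ (max x 0) := hρ.1 _ (le_max_right _ _)
  calc _ = (Real.exp (κ * c * τ) * Real.exp (-(κ * max x 0))) * ρ (max x 0) := by ring
    _ ≤ _ := mul_le_mul h2 h1 h3.le (by positivity)

/-- The solution on the unstable side. Every characteristic reaching a neighbourhood of the shock
at time `t` starts from a point at or beyond `c t - 2`, where the data carry the factor
`exp (-κ c t) * ρ (c t)`; the exponential exactly compensates the growth `exp (g' a * t)`. -/
lemma right_sol {f g : ℝ → ℝ} (hf : ContDiff ℝ (⊤ : ℕ∞) f) (hg : ContDiff ℝ (⊤ : ℕ∞) g)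
    {a σ κ : ℝ} (hga : g a = 0) (hl : 0 < deriv g a) (hc : deriv f a < σ)
    (hκ : κ = deriv g a / (σ - deriv f a)) {ρ : ℝ → ℝ} (hρ : IsSubExpWeight ρ) :
    ∃ K > (0:ℝ), ∃ θ > (0:ℝ), ∃ δ > (0:ℝ), ∀ W : ℝ → ℝ, ContDiff ℝ 1 W → ∀ E ≤ δ,
      (∀ x, |W x| ≤ E * (ρ (max x 0) * Real.exp (-(κ * max x 0))) ∧
        |deriv W x| ≤ E * (ρ (max x 0) * Real.exp (-(κ * max x 0)))) →
      ∃ v : ℝ → ℝ → ℝ, ContDiff ℝ 1 (uncurry v) ∧ (∀ x, 0 ≤ x → v 0 x = a + W x) ∧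
        (∀ t x, |v t x - a| ≤ K * E ∧ |deriv (v t) x| ≤ K * E) ∧
        (∀ t, 0 ≤ t → ∀ x, |v t x - a| ≤ K * E * ρ (θ * t) ∧
          |deriv (v t) x| ≤ K * E * ρ (θ * t)) ∧
        (∀ t, 0 ≤ t → ∀ y, 0 ≤ y → ∀ x, y - 1 / 4 ≤ x →
          |v t x - a| ≤ K * E * ρ (θ * t) * Real.exp (-(κ * y)) ∧
          |deriv (v t) x| ≤ K * E * ρ (θ * t) * Real.exp (-(κ * y))) ∧
        (∀ t, 0 ≤ t → ∀ x, -(1 / 4) ≤ x →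
          deriv (fun s => v s x) t + (deriv f (v t x) - σ) * deriv (v t) x = g (v t x)) := by
  obtain ⟨c, hcdef⟩ : ∃ c, c = σ - deriv f a := ⟨_, rfl⟩
  have hc0 : 0 < c := by linarith
  rw [← hcdef] at hκ
  have hκc : deriv g a = κ * c := by rw [hκ]; field_simp
  have hκ0 : 0 < κ := by rw [hκ]; positivity
  obtain ⟨K, hK, δ, hδ, H⟩ := exists_half hf hg hga hl.ne' hcdef
  obtain ⟨χ, hχ, hχd, hχm, hχi⟩ := exists_clamp
  have hρ0 : 0 < ρ 0 := hρ.1 0 le_rfl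
  have hρ2 : 0 < ρ 2 := hρ.1 2 (by norm_num)
  have hρle : ∀ x, 0 ≤ x → ρ x ≤ ρ 0 := fun x hx => hρ.2.1 _ _ le_rfl hx
  -- the shifted weight is comparable with the weight at half the speed
  have hcmp : ∀ t, 0 ≤ t → ρ (max (c * t - 2) 0) ≤ ρ 0 / ρ 2 * ρ (c / 2 * t) := fun t ht => by
    have hct : 0 ≤ c / 2 * t := by positivity
    have hpos := hρ.1 _ hct
    rcases le_total (c / 2 * t) 2 with h | h
    · have h1 := hρ.2.1 _ _ hct h
      calc _ ≤ ρ 0 := hρle _ (le_max_right _ _)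
        _ = ρ 0 / ρ 2 * ρ 2 := by field_simp
        _ ≤ _ := by gcongr
    · have h1 : ρ (max (c * t - 2) 0) ≤ ρ (c / 2 * t) :=
        hρ.2.1 _ _ hct (le_trans (by linarith) (le_max_left _ _))
      have h2 : 1 ≤ ρ 0 / ρ 2 := (one_le_div hρ2).2 (hρle 2 (by norm_num))
      nlinarith
  -- the identity on `[-1, ∞)`, which contains the labels of all points of `[-1/4, ∞)`
  set χ₁ : ℝ → ℝ := fun x => χ (x + 1) - 1 with hχ₁
  have hχ₁d : ∀ x, HasDerivAt χ₁ (deriv χ (x + 1)) x := fun x => by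
    have h1 : HasDerivAt χ (deriv χ (x + 1)) (x + 1) :=
      (hχ.differentiable (by simp) (x + 1)).hasDerivAt
    exact (HasDerivAt.comp_add_const x 1 h1).sub_const 1
  have hχ₁C : ContDiff ℝ 1 χ₁ := (hχ.comp (contDiff_id.add contDiff_const)).sub contDiff_const
  have hχ₁i : ∀ x, -1 ≤ x → χ₁ x = x ∧ HasDerivAt χ₁ 1 x := fun x hx => by
    have h1 := hχi (x + 1) (by linarith)
    refine ⟨by simp only [hχ₁, h1.1]; ring, ?_⟩
    have := hχ₁d x
    rwa [h1.2.deriv] at this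
  refine ⟨K * Real.exp (2 * κ) * (ρ 0 / ρ 2 + ρ 0), by positivity, c / 2, by positivity,
    δ / (Real.exp (2 * κ) * ρ 0), by positivity, ?_⟩
  intro W hW E hE hWb
  have hE0 : 0 ≤ E := by
    have := (abs_nonneg _).trans (hWb 0).1
    exact nonneg_of_mul_nonneg_left this (mul_pos (hρ.1 _ (le_max_right _ _)) (Real.exp_pos _))
  rw [le_div_iff₀ (by positivity)] at hE
  have hE1 : Real.exp (2 * κ) ≥ 1 := Real.one_le_exp (by positivity)
  -- size of the data at the foot of a characteristic
  have hfoot : ∀ {p τ x y : ℝ}, 0 ≤ y → c * τ + y - 2 ≤ x →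
      |p| ≤ E * (ρ (max x 0) * Real.exp (-(κ * max x 0))) →
      Real.exp (deriv g a * τ) * |p| ≤
        E * (Real.exp (2 * κ) * Real.exp (-(κ * y)) * ρ (max (c * τ - 2) 0)) :=
    fun {p τ x y} hy hx hp => by
      rw [hκc]
      calc Real.exp (κ * c * τ) * |p| ≤ Real.exp (κ * c * τ) *
            (E * (ρ (max x 0) * Real.exp (-(κ * max x 0)))) := by gcongr
        _ = E * (Real.exp (κ * c * τ) * (ρ (max x 0) * Real.exp (-(κ * max x 0)))) := by ring
        _ ≤ _ := mul_le_mul_of_nonneg_left (exp_mul_weight_le hρ hκ0.le hy hx) hE0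
  have hfoot0 : ∀ {p τ x : ℝ}, c * τ - 2 ≤ x →
      |p| ≤ E * (ρ (max x 0) * Real.exp (-(κ * max x 0))) →
      Real.exp (deriv g a * τ) * |p| ≤ E * (Real.exp (2 * κ) * ρ 0) := fun {p τ x} hx hp => by
    refine (hfoot le_rfl (by linarith) hp).trans ?_
    have h0 : ρ (max (c * τ - 2) 0) ≤ ρ 0 := hρle _ (le_max_right _ _)
    simp only [mul_zero, neg_zero, Real.exp_zero, mul_one]
    gcongr
  have hsmall : ∀ {p x : ℝ}, |p| ≤ E * (ρ (max x 0) * Real.exp (-(κ * max x 0))) →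
      |p| ≤ E * (Real.exp (2 * κ) * ρ 0) := fun {p x} hp => by
    refine hp.trans (mul_le_mul_of_nonneg_left ?_ hE0)
    have h1 : ρ (max x 0) ≤ ρ 0 := hρle _ (le_max_right _ _)
    have h2 : Real.exp (-(κ * max x 0)) ≤ 1 := by
      rw [Real.exp_le_one_iff]
      have : 0 ≤ κ * max x 0 := mul_nonneg hκ0.le (le_max_right _ _)
      linarith
    have h3 : 0 < ρ (max x 0) := hρ.1 _ (le_max_right _ _)
    nlinarith [Real.exp_pos (-(κ * max x 0))]
  have hlow : ∀ t ξ, c * χ t - 2 ≤ c * χ t + χ₁ ξ := fun t ξ => by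
    have := hχm (ξ + 1); simp only [hχ₁]; linarith
  obtain ⟨v, X, hv, hX, hv0, hvb, hvb', hpde⟩ := H χ χ₁ W hχ hχ₁C ((hχi 0 le_rfl).1)
    (fun x => by rw [(hχ₁d x).deriv]; exact hχd _) hW _ hE
    (fun x => hsmall (hWb x).1) (fun x => hsmall (hWb x).2)
    (fun t ξ => hfoot0 (hlow t ξ) (hWb _).1) (fun t ξ => hfoot0 (hlow t ξ) (hWb _).2)
  -- passing from the foot to the final form of the estimates
  have hfin : ∀ {p t y : ℝ}, 0 ≤ t →
      p ≤ E * (Real.exp (2 * κ) * Real.exp (-(κ * y)) * ρ (max (c * t - 2) 0)) →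
      K * p ≤ K * Real.exp (2 * κ) * (ρ 0 / ρ 2 + ρ 0) * E * ρ (c / 2 * t) *
        Real.exp (-(κ * y)) := fun {p t y} ht hp => by
    have h1 := hcmp t ht
    have h2 : 0 < ρ (c / 2 * t) := hρ.1 _ (by positivity)
    calc K * p ≤ K * (E * (Real.exp (2 * κ) * Real.exp (-(κ * y)) * ρ (max (c * t - 2) 0))) :=
          mul_le_mul_of_nonneg_left hp hK.le
      _ ≤ K * (E * (Real.exp (2 * κ) * Real.exp (-(κ * y)) *
          ((ρ 0 / ρ 2 + ρ 0) * ρ (c / 2 * t)))) := by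
          gcongr
          nlinarith
      _ = _ := by ring
  have hfin0 : ∀ {p : ℝ}, p ≤ E * (Real.exp (2 * κ) * ρ 0) →
      K * p ≤ K * Real.exp (2 * κ) * (ρ 0 / ρ 2 + ρ 0) * E := fun {p} hp => by
    calc K * p ≤ K * (E * (Real.exp (2 * κ) * (ρ 0 / ρ 2 + ρ 0))) := by
          refine mul_le_mul_of_nonneg_left (hp.trans ?_) hK.le
          have : 0 < ρ 0 / ρ 2 := by positivity
          gcongr
          linarith
      _ = _ := by ring
  have hXlow : ∀ t y x, 0 ≤ t → 0 ≤ y → y - 1 / 4 ≤ x →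
      c * t + y - 2 ≤ c * χ t + χ₁ (X t x) := fun t y x ht hy hx => by
    have h1 := (abs_le.1 (hX t x)).1
    rw [(hχ₁i (X t x) (by linarith)).1, (hχi t ht).1]
    linarith
  refine ⟨v, hv, fun x hx => ?_, fun t x => ⟨?_, ?_⟩, fun t ht x => ⟨?_, ?_⟩,
    fun t ht y hy x hx => ⟨?_, ?_⟩, fun t ht x hx => ?_⟩
  · rw [hv0, (hχ₁i x (by linarith)).1]
  · exact (hvb t x).trans (hfin0 (hfoot0 (hlow t _) (hWb _).1))
  · exact (hvb' t x).trans (hfin0 (hfoot0 (hlow t _) (hWb _).2))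
  · have h1 := hfoot le_rfl (by linarith [hlow t (X t x)]) (hWb (c * χ t + χ₁ (X t x))).1
      (τ := χ t)
    have h2 := (hvb t x).trans (hfin ht (by rwa [(hχi t ht).1] at h1 ⊢))
    simpa using h2
  · have h1 := hfoot le_rfl (by linarith [hlow t (X t x)]) (hWb (c * χ t + χ₁ (X t x))).2
      (τ := χ t)
    have h2 := (hvb' t x).trans (hfin ht (by rwa [(hχi t ht).1] at h1 ⊢))
    simpa using h2
  · have h1 := hfoot hy (by rw [(hχi t ht).1]; have := hXlow t y x ht hy hx
                            rwa [(hχi t ht).1] at this) (hWb (c * χ t + χ₁ (X t x))).1 (τ := χ t)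
    exact (hvb t x).trans (hfin ht (by rwa [(hχi t ht).1] at h1 ⊢))
  · have h1 := hfoot hy (by rw [(hχi t ht).1]; have := hXlow t y x ht hy hx
                            rwa [(hχi t ht).1] at this) (hWb (c * χ t + χ₁ (X t x))).2 (τ := χ t)
    exact (hvb' t x).trans (hfin ht (by rwa [(hχi t ht).1] at h1 ⊢))
  · have h1 := (abs_le.1 (hX t x)).1
    exact hpde t x (hχi t ht).2 (hχi t ht).1 (hχ₁i _ (by linarith)).2

/-- The solution on the stable side, where the damping `exp (g' a * t)` dominates the decay of any
sub-exponential weight run at a slow enough speed. -/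
lemma left_sol {f g : ℝ → ℝ} (hf : ContDiff ℝ (⊤ : ℕ∞) f) (hg : ContDiff ℝ (⊤ : ℕ∞) g)
    {a σ : ℝ} (hga : g a = 0) (hl : deriv g a < 0) {ρ : ℝ → ℝ} (hρ : IsSubExpWeight ρ) :
    ∃ K > (0:ℝ), ∃ θ > (0:ℝ), ∃ δ > (0:ℝ), ∀ W : ℝ → ℝ, ContDiff ℝ 1 W → ∀ E ≤ δ,
      (∀ x, |W x| ≤ E ∧ |deriv W x| ≤ E) →
      ∃ v : ℝ → ℝ → ℝ, ContDiff ℝ 1 (uncurry v) ∧ (∀ x, v 0 x = a + W x) ∧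
        (∀ t x, |v t x - a| ≤ K * E ∧ |deriv (v t) x| ≤ K * E) ∧
        (∀ t, 0 ≤ t → ∀ x, |v t x - a| ≤ K * E * ρ (θ * t) ∧
          |deriv (v t) x| ≤ K * E * ρ (θ * t)) ∧
        (∀ t, 0 ≤ t → ∀ x,
          deriv (fun s => v s x) t + (deriv f (v t x) - σ) * deriv (v t) x = g (v t x)) := by
  obtain ⟨K, hK, δ, hδ, H⟩ := exists_half hf hg hga hl.ne (rfl : σ - deriv f a = _)
  obtain ⟨χ, hχ, hχd, hχm, hχi⟩ := exists_clamp
  obtain ⟨C, hC, ω, hω, hlow⟩ := hρ.2.2.2.1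
  set l := deriv g a with hldef
  refine ⟨K * (Real.exp (-l) + 1 / C), by positivity, -l / ω, by
    apply div_pos <;> linarith, δ / Real.exp (-l), by positivity, ?_⟩
  intro W hW E hE hWb
  have hE0 : 0 ≤ E := (abs_nonneg _).trans (hWb 0).1
  rw [le_div_iff₀ (Real.exp_pos _)] at hE
  have he1 : 1 ≤ Real.exp (-l) := Real.one_le_exp (by linarith)
  have hexp : ∀ t, Real.exp (l * χ t) ≤ Real.exp (-l) := fun t => by
    rw [Real.exp_le_exp]; nlinarith [hχm t]
  have hbd : ∀ {p t : ℝ}, |p| ≤ E → Real.exp (l * χ t) * |p| ≤ E * Real.exp (-l) :=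
    fun {p t} hp => by
      calc _ ≤ Real.exp (-l) * E := mul_le_mul (hexp t) hp (abs_nonneg _) (Real.exp_pos _).le
        _ = _ := mul_comm _ _
  have hsm : ∀ {p : ℝ}, |p| ≤ E → |p| ≤ E * Real.exp (-l) := fun {p} hp => by nlinarith
  obtain ⟨v, X, hv, hX, hv0, hvb, hvb', hpde⟩ := H χ id W hχ contDiff_id ((hχi 0 le_rfl).1)
    (fun x => by simp) hW _ hE (fun x => hsm (hWb x).1) (fun x => hsm (hWb x).2)
    (fun t ξ => hbd (hWb _).1) (fun t ξ => hbd (hWb _).2)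
  have hfin0 : ∀ {p t : ℝ}, |p| ≤ E → K * (Real.exp (l * χ t) * |p|) ≤
      K * (Real.exp (-l) + 1 / C) * E := fun {p t} hp => by
    have h1 : 0 < 1 / C := by positivity
    calc _ ≤ K * (E * Real.exp (-l)) := mul_le_mul_of_nonneg_left (hbd hp) hK.le
      _ ≤ K * (E * (Real.exp (-l) + 1 / C)) := by gcongr; linarith
      _ = _ := by ring
  have hfin : ∀ {p t : ℝ}, 0 ≤ t → |p| ≤ E → K * (Real.exp (l * χ t) * |p|) ≤
      K * (Real.exp (-l) + 1 / C) * E * ρ (-l / ω * t) := fun {p t} ht hp => by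
    have h0 : 0 ≤ -l / ω * t := mul_nonneg (div_nonneg (by linarith) hω.le) ht
    have h1 := hlow _ h0
    have h2 : -ω * (-l / ω * t) = l * t := by field_simp
    rw [h2] at h1
    have h3 : Real.exp (l * t) ≤ (Real.exp (-l) + 1 / C) * ρ (-l / ω * t) := by
      have h4 : Real.exp (l * t) ≤ 1 / C * ρ (-l / ω * t) := by
        rw [div_mul_eq_mul_div, one_mul, le_div_iff₀ hC]; linarith
      nlinarith [hρ.1 _ h0]
    rw [(hχi t ht).1]
    calc _ ≤ K * (((Real.exp (-l) + 1 / C) * ρ (-l / ω * t)) * E) :=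
          mul_le_mul_of_nonneg_left (mul_le_mul h3 hp (abs_nonneg _)
            ((Real.exp_pos _).le.trans h3)) hK.le
      _ = _ := by ring
  refine ⟨v, hv, fun x => hv0 x, fun t x => ⟨?_, ?_⟩, fun t ht x => ⟨?_, ?_⟩, fun t ht x => ?_⟩
  · exact (hvb t x).trans (hfin0 (hWb _).1)
  · exact (hvb' t x).trans (hfin0 (hWb _).2)
  · exact (hvb t x).trans (hfin ht (hWb _).1)
  · exact (hvb' t x).trans (hfin ht (hWb _).2)
  · exact hpde t x (hχi t ht).2 (hχi t ht).1 (hasDerivAt_id _)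

/-! ### Weak solutions with one shock -/

lemma hasDerivAt_fst_of_contDiff {P : ℝ × ℝ → ℝ} (hP : ContDiff ℝ 1 P) (t x : ℝ) :
    HasDerivAt (fun s => P (s, x)) (fderiv ℝ P (t, x) (1, 0)) t := by
  have hp : HasFDerivAt P (fderiv ℝ P (t, x)) (t, x) :=
    (hP.differentiable (by simp) _).hasFDerivAt
  exact hp.comp_hasDerivAt t ((hasDerivAt_id t).prodMk (hasDerivAt_const t x))

lemma hasDerivAt_snd_of_contDiff {P : ℝ × ℝ → ℝ} (hP : ContDiff ℝ 1 P) (t x : ℝ) :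
    HasDerivAt (fun y => P (t, y)) (fderiv ℝ P (t, x) (0, 1)) x := by
  have hp : HasFDerivAt P (fderiv ℝ P (t, x)) (t, x) :=
    (hP.differentiable (by simp) _).hasFDerivAt
  exact hp.comp_hasDerivAt x ((hasDerivAt_const x t).prodMk (hasDerivAt_id x))

/-- The chain rule along a `C¹` curve `s ↦ (s, b s)`. -/
lemma hasDerivAt_along {P : ℝ × ℝ → ℝ} (hP : ContDiff ℝ 1 P) {b : ℝ → ℝ} {b' t : ℝ}
    (hb : HasDerivAt b b' t) :
    HasDerivAt (fun s => P (s, b s))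
      (fderiv ℝ P (t, b t) (1, 0) + b' * fderiv ℝ P (t, b t) (0, 1)) t := by
  have hp : HasFDerivAt P (fderiv ℝ P (t, b t)) (t, b t) :=
    (hP.differentiable (by simp) _).hasFDerivAt
  refine (hp.comp_hasDerivAt t ((hasDerivAt_id t).prodMk hb)).congr_deriv ?_
  have : ((1 : ℝ), b') = (1, 0) + b' • ((0 : ℝ), (1 : ℝ)) := by ext <;> simp
  rw [this, map_add, map_smul, smul_eq_mul]

lemma continuous_partial {P : ℝ × ℝ → ℝ} (hP : ContDiff ℝ 1 P) (e : ℝ × ℝ) :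
    Continuous fun p => fderiv ℝ P p e :=
  (hP.continuous_fderiv (by simp)).clm_apply continuous_const

lemma hasCompactSupport_slice_snd {P : ℝ × ℝ → ℝ} (hP : HasCompactSupport P) (t : ℝ) :
    HasCompactSupport fun y => P (t, y) := by
  refine HasCompactSupport.intro (hP.isCompact.image continuous_snd) fun y hy => ?_
  by_contra h
  exact hy ⟨(t, y), subset_tsupport _ h, rfl⟩

lemma hasCompactSupport_slice_fst {P : ℝ × ℝ → ℝ} (hP : HasCompactSupport P) (y : ℝ) :
    HasCompactSupport fun t => P (t, y) := by
  refine HasCompactSupport.intro (hP.isCompact.image continuous_fst) fun t ht => ?_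
  by_contra h
  exact ht ⟨(t, y), subset_tsupport _ h, rfl⟩

lemma integral_partial_fst_eq_zero {P : ℝ × ℝ → ℝ} (hP : ContDiff ℝ 1 P)
    (hPc : HasCompactSupport P) (S : Set ℝ) :
    ∫ t, ∫ y in S, fderiv ℝ P (t, y) (1, 0) = 0 := by
  have hc := hPc.fderiv_apply (𝕜 := ℝ) (1, 0)
  have hcont := continuous_partial hP (1, 0)
  rw [integral_integral_swap (f := fun t y => fderiv ℝ P (t, y) (1, 0))
    (hcont.integrable_of_hasCompactSupport hc)]
  refine integral_eq_zero_of_ae (Eventually.of_forall fun y => ?_)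
  refine integral_eq_zero_of_hasDerivAt_of_integrable
    (fun t => hasDerivAt_fst_of_contDiff hP t y) ?_ ?_
  · exact (hcont.comp (by fun_prop : Continuous fun t : ℝ => (t, y))).integrable_of_hasCompactSupport
      (hasCompactSupport_slice_fst hc y)
  · exact (hP.continuous.comp (by fun_prop : Continuous fun t : ℝ => (t, y))).integrable_of_hasCompactSupport
      (hasCompactSupport_slice_fst hPc y)

/-- The divergence theorem on the half plane `y ≤ 0` for compactly supported fields. -/
lemma integral_Iic_partial {P Q : ℝ × ℝ → ℝ} (hP : ContDiff ℝ 1 P) (hPc : HasCompactSupport P)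
    (hQ : ContDiff ℝ 1 Q) (hQc : HasCompactSupport Q) :
    ∫ t, ∫ y in Iic (0:ℝ), (fderiv ℝ P (t, y) (1, 0) + fderiv ℝ Q (t, y) (0, 1)) =
      ∫ t, Q (t, 0) := by
  have hc := hPc.fderiv_apply (𝕜 := ℝ) (1, 0)
  have hcont := continuous_partial hP (1, 0)
  have hc2 := hQc.fderiv_apply (𝕜 := ℝ) (0, 1)
  have hcont2 := continuous_partial hQ (0, 1)
  have hI := hcont.integrable_of_hasCompactSupport hc
    (μ := (volume : Measure ℝ).prod (volume.restrict (Iic (0:ℝ))))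
  have hI2 := hcont2.integrable_of_hasCompactSupport hc2
    (μ := (volume : Measure ℝ).prod (volume.restrict (Iic (0:ℝ))))
  have := integral_integral_add hI hI2
  rw [this, integral_partial_fst_eq_zero hP hPc, zero_add]
  refine integral_congr_ae (Eventually.of_forall fun t => ?_)
  have hd : (fun y => fderiv ℝ Q (t, y) (0, 1)) = deriv fun y => Q (t, y) :=
    funext fun y => (hasDerivAt_snd_of_contDiff hQ t y).deriv.symm
  simp only [hd]
  exact (hasCompactSupport_slice_snd hQc t).integral_Iic_deriv_eq (hQ.comp (by fun_prop)) 0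

/-- The divergence theorem on the half plane `y > 0` for compactly supported fields. -/
lemma integral_Ioi_partial {P Q : ℝ × ℝ → ℝ} (hP : ContDiff ℝ 1 P) (hPc : HasCompactSupport P)
    (hQ : ContDiff ℝ 1 Q) (hQc : HasCompactSupport Q) :
    ∫ t, ∫ y in Ioi (0:ℝ), (fderiv ℝ P (t, y) (1, 0) + fderiv ℝ Q (t, y) (0, 1)) =
      -∫ t, Q (t, 0) := by
  have hc := hPc.fderiv_apply (𝕜 := ℝ) (1, 0)
  have hcont := continuous_partial hP (1, 0)
  have hc2 := hQc.fderiv_apply (𝕜 := ℝ) (0, 1)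
  have hcont2 := continuous_partial hQ (0, 1)
  have hI := hcont.integrable_of_hasCompactSupport hc
    (μ := (volume : Measure ℝ).prod (volume.restrict (Ioi (0:ℝ))))
  have hI2 := hcont2.integrable_of_hasCompactSupport hc2
    (μ := (volume : Measure ℝ).prod (volume.restrict (Ioi (0:ℝ))))
  have := integral_integral_add hI hI2
  rw [this, integral_partial_fst_eq_zero hP hPc, zero_add, ← integral_neg]
  refine integral_congr_ae (Eventually.of_forall fun t => ?_)
  have hd : (fun y => fderiv ℝ Q (t, y) (0, 1)) = deriv fun y => Q (t, y) :=
    funext fun y => (hasDerivAt_snd_of_contDiff hQ t y).deriv.symm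
  simp only [hd]
  exact (hasCompactSupport_slice_snd hQc t).integral_Ioi_deriv_eq (hQ.comp (by fun_prop)) 0

/-- In coordinates following the shock, the integrand of the weak formulation built from a classical
solution `w` is a space-time divergence. -/
lemma integrand_eq_divergence {f g : ℝ → ℝ} (hf : ContDiff ℝ 1 f) {w Φ : ℝ × ℝ → ℝ}
    {d : ℝ → ℝ} (hw : ContDiff ℝ 1 w) (hΦ : ContDiff ℝ 1 Φ) (hd : ContDiff ℝ 1 d) {t y : ℝ}
    (hpde : Φ (t, y) ≠ 0 → fderiv ℝ w (t, y) (1, 0) +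
      (deriv f (w (t, y)) - d t) * fderiv ℝ w (t, y) (0, 1) = g (w (t, y))) :
    w (t, y) * fderiv ℝ Φ (t, y) (1, 0) + (f (w (t, y)) - d t * w (t, y)) *
      fderiv ℝ Φ (t, y) (0, 1) + g (w (t, y)) * Φ (t, y) =
    fderiv ℝ (fun p => w p * Φ p) (t, y) (1, 0) +
      fderiv ℝ (fun p => (f (w p) - d p.1 * w p) * Φ p) (t, y) (0, 1) := by
  have hP : ContDiff ℝ 1 fun p => w p * Φ p := hw.mul hΦ
  have hQ : ContDiff ℝ 1 fun p : ℝ × ℝ => (f (w p) - d p.1 * w p) * Φ p :=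
    ((hf.comp hw).sub ((hd.comp contDiff_fst).mul hw)).mul hΦ
  have hfd : HasDerivAt f (deriv f (w (t, y))) (w (t, y)) :=
    (hf.differentiable (by simp) _).hasDerivAt
  have hw2 := hasDerivAt_snd_of_contDiff hw t y
  have h1 := (hasDerivAt_fst_of_contDiff hP t y).unique
    ((hasDerivAt_fst_of_contDiff hw t y).mul (hasDerivAt_fst_of_contDiff hΦ t y))
  have h2 := (hasDerivAt_snd_of_contDiff hQ t y).unique
    (((HasDerivAt.comp (h₂ := f) (h := fun y => w (t, y)) y hfd hw2).sub
      (hw2.const_mul (d t))).mul (hasDerivAt_snd_of_contDiff hΦ t y))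
  rw [h1, h2]
  simp only [Function.comp_apply, Pi.sub_apply]
  by_cases h0 : Φ (t, y) = 0
  · rw [h0]; ring
  · rw [← hpde h0]; ring

/-- Two classical solutions glued along a curve satisfying the Rankine-Hugoniot relation form a
weak solution. -/
lemma isWeakSol_of_shock {f g : ℝ → ℝ} (hf : ContDiff ℝ 1 f) (hg : Continuous g)
    {vl vr : ℝ → ℝ → ℝ} {σ : ℝ} {ψ : ℝ → ℝ} (hvl : ContDiff ℝ 1 (uncurry vl))
    (hvr : ContDiff ℝ 1 (uncurry vr)) (hψ : ContDiff ℝ 2 ψ)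
    (hl : ∀ t, 0 ≤ t → ∀ x ≤ ψ t,
      deriv (fun s => vl s x) t + (deriv f (vl t x) - σ) * deriv (vl t) x = g (vl t x))
    (hr : ∀ t, 0 ≤ t → ∀ x, ψ t ≤ x →
      deriv (fun s => vr s x) t + (deriv f (vr t x) - σ) * deriv (vr t) x = g (vr t x))
    (hRH : ∀ t, 0 ≤ t → f (vr t (ψ t)) - f (vl t (ψ t)) =
      (σ + deriv ψ t) * (vr t (ψ t) - vl t (ψ t))) :
    IsWeakSol f g fun t x => if x < σ * t + ψ t then vl t (x - σ * t) else vr t (x - σ * t) := by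
  intro φ hφ hφc hφs
  set u : ℝ → ℝ → ℝ :=
    fun t x => if x < σ * t + ψ t then vl t (x - σ * t) else vr t (x - σ * t) with hu
  -- the non-integrable case does not occur, but the value `0` of the integral there disposes of it
  by_cases hint : Integrable (fun p : ℝ × ℝ => u p.1 p.2 * deriv (fun s => φ s p.2) p.1
      + f (u p.1 p.2) * deriv (fun y => φ p.1 y) p.2 + g (u p.1 p.2) * φ p.1 p.2)
  swap
  · exact integral_undef hint
  have hψd : ContDiff ℝ 1 (deriv ψ) := by
    have := (contDiff_succ_iff_deriv (n := 1)).1 (by rw [one_add_one_eq_two]; exact hψ)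
    exact this.2.2
  have hψ1 : ∀ t, HasDerivAt ψ (deriv ψ t) t := fun t =>
    (hψ.differentiable (by simp) t).hasDerivAt
  have hφ1 : ContDiff ℝ 1 (uncurry φ) := hφ.of_le (by exact_mod_cast le_top)
  set s : ℝ → ℝ := fun t => σ * t + ψ t with hs
  set d : ℝ → ℝ := fun t => σ + deriv ψ t with hddef
  have hd : ContDiff ℝ 1 d := contDiff_const.add hψd
  have hsd : ∀ t, HasDerivAt s (d t) t := fun t => by
    have := ((hasDerivAt_id' t).const_mul σ).add (hψ1 t)
    rwa [mul_one] at this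
  have hsC : ContDiff ℝ 1 s := (contDiff_const.mul contDiff_id).add (hψ.of_le (by norm_num))
  have hψC : ContDiff ℝ 1 ψ := hψ.of_le (by norm_num)
  set Φ : ℝ × ℝ → ℝ := fun p => uncurry φ (p.1, p.2 + s p.1) with hΦdef
  have hΦ : ContDiff ℝ 1 Φ :=
    hφ1.comp (contDiff_fst.prodMk (contDiff_snd.add (hsC.comp contDiff_fst)))
  have hΦc : HasCompactSupport Φ := by
    refine HasCompactSupport.intro (K := (fun p : ℝ × ℝ => (p.1, p.2 - s p.1)) '' tsupport (uncurry φ))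
      (hφc.isCompact.image ?_) fun p hp => ?_
    · exact continuous_fst.prodMk (continuous_snd.sub (hsC.continuous.comp continuous_fst))
    · by_contra h
      exact hp ⟨(p.1, p.2 + s p.1), subset_tsupport _ h, by simp⟩
  have hΦ0 : ∀ t y, Φ (t, y) ≠ 0 → 0 ≤ t := fun t y h =>
    le_of_lt (hφs (subset_tsupport _ h)).1
  have hΦ1 : ∀ t y, fderiv ℝ Φ (t, y) (1, 0) = fderiv ℝ (uncurry φ) (t, y + s t) (1, 0) +
      d t * fderiv ℝ (uncurry φ) (t, y + s t) (0, 1) := fun t y =>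
    (hasDerivAt_fst_of_contDiff hΦ t y).unique (hasDerivAt_along hφ1 ((hsd t).const_add y))
  have hΦ2 : ∀ t y, fderiv ℝ Φ (t, y) (0, 1) = fderiv ℝ (uncurry φ) (t, y + s t) (0, 1) :=
    fun t y => (hasDerivAt_snd_of_contDiff hΦ t y).unique
      (HasDerivAt.comp_add_const (f := fun x => uncurry φ (t, x)) y (s t) (hasDerivAt_snd_of_contDiff hφ1 t (y + s t)))
  -- the two branches in coordinates following the shock
  set W : (ℝ → ℝ → ℝ) → ℝ × ℝ → ℝ := fun v p => v p.1 (p.2 + ψ p.1) with hW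
  have hWC : ∀ {v : ℝ → ℝ → ℝ}, ContDiff ℝ 1 (uncurry v) → ContDiff ℝ 1 (W v) := fun {v} hv =>
    ContDiff.comp (g := uncurry v) hv
      (contDiff_fst.prodMk (contDiff_snd.add (hψC.comp contDiff_fst)))
  have hWpde : ∀ {v : ℝ → ℝ → ℝ}, ContDiff ℝ 1 (uncurry v) → ∀ t y,
      deriv (fun s => v s (y + ψ t)) t + (deriv f (v t (y + ψ t)) - σ) * deriv (v t) (y + ψ t)
        = g (v t (y + ψ t)) →
      fderiv ℝ (W v) (t, y) (1, 0) + (deriv f (W v (t, y)) - d t) * fderiv ℝ (W v) (t, y) (0, 1) =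
        g (W v (t, y)) := fun {v} hv t y h => by
    have h1 := (hasDerivAt_fst_of_contDiff (hWC hv) t y).unique
      (hasDerivAt_along hv ((hψ1 t).const_add y))
    have h2 := (hasDerivAt_snd_of_contDiff (hWC hv) t y).unique
      (HasDerivAt.comp_add_const (f := fun x => uncurry v (t, x)) y (ψ t) (hasDerivAt_snd_of_contDiff hv t (y + ψ t)))
    have h3 := (hasDerivAt_fst_of_contDiff hv t (y + ψ t)).deriv
    have h4 := (hasDerivAt_snd_of_contDiff hv t (y + ψ t)).deriv
    simp only [uncurry_apply_pair] at h3 h4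
    change deriv (v t) (y + ψ t) = _ at h4
    rw [h3, h4] at h
    rw [h1, h2]
    simp only [hW, hddef]
    linear_combination h
  set A : (ℝ → ℝ → ℝ) → ℝ × ℝ → ℝ := fun v p => W v p * fderiv ℝ Φ p (1, 0) +
    (f (W v p) - d p.1 * W v p) * fderiv ℝ Φ p (0, 1) + g (W v p) * Φ p with hA
  have hAc : ∀ {v : ℝ → ℝ → ℝ}, ContDiff ℝ 1 (uncurry v) → Continuous (A v) := fun {v} hv => by
    have c1 := (hWC hv).continuous
    have c2 := continuous_partial hΦ (1, 0)
    have c3 := continuous_partial hΦ (0, 1)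
    have c4 := hd.continuous
    have c5 := hf.continuous
    have c6 := hΦ.continuous
    simp only [hA]
    fun_prop
  have hAs : ∀ v : ℝ → ℝ → ℝ, HasCompactSupport (A v) := fun v =>
    ((HasCompactSupport.mul_left (f := W v) (hΦc.fderiv_apply (𝕜 := ℝ) (1, 0))).add
      (HasCompactSupport.mul_left (f := fun p => f (W v p) - d p.1 * W v p) (hΦc.fderiv_apply (𝕜 := ℝ) (0, 1)))).add
      (HasCompactSupport.mul_left (f := fun p => g (W v p)) hΦc)
  set G : ℝ × ℝ → ℝ := fun p => u p.1 p.2 * deriv (fun s => φ s p.2) p.1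
      + f (u p.1 p.2) * deriv (fun y => φ p.1 y) p.2 + g (u p.1 p.2) * φ p.1 p.2 with hG
  have hφt : ∀ t x, deriv (fun s => φ s x) t = fderiv ℝ (uncurry φ) (t, x) (1, 0) := fun t x =>
    (hasDerivAt_fst_of_contDiff hφ1 t x).deriv
  have hφx : ∀ t x, deriv (fun y => φ t y) x = fderiv ℝ (uncurry φ) (t, x) (0, 1) := fun t x =>
    (hasDerivAt_snd_of_contDiff hφ1 t x).deriv
  have hGA : ∀ (v : ℝ → ℝ → ℝ) t y, u t (y + s t) = v t (y + ψ t) →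
      G (t, y + s t) = A v (t, y) := fun v t y h => by
    simp only [hG, hA, hW, hφt, hφx, hΦ1, hΦ2, h]
    simp only [hΦdef, uncurry_apply_pair]
    ring
  have hul : ∀ t y, y < 0 → u t (y + s t) = vl t (y + ψ t) := fun t y hy => by
    have h1 : y + s t < σ * t + ψ t := by simp only [hs]; linarith
    have h2 : y + s t - σ * t = y + ψ t := by simp only [hs]; ring
    simp only [hu, if_pos h1, h2]
  have hur : ∀ t y, 0 ≤ y → u t (y + s t) = vr t (y + ψ t) := fun t y hy => by
    have h1 : ¬ y + s t < σ * t + ψ t := by simp only [hs]; linarith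
    have h2 : y + s t - σ * t = y + ψ t := by simp only [hs]; ring
    simp only [hu, if_neg h1, h2]
  have hslice : ∀ {v : ℝ → ℝ → ℝ}, ContDiff ℝ 1 (uncurry v) → ∀ t,
      Integrable fun y => A v (t, y) := fun {v} hv t =>
    ((hAc hv).comp (by fun_prop : Continuous fun y : ℝ => (t, y))).integrable_of_hasCompactSupport
      (hasCompactSupport_slice_snd (hAs v) t)
  have hsplit : ∀ t, ∫ x, G (t, x) =
      (∫ y in Iic (0:ℝ), A vl (t, y)) + ∫ y in Ioi (0:ℝ), A vr (t, y) := fun t => by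
    rw [← integral_add_right_eq_self (fun x => G (t, x)) (s t), integral_Iic_eq_integral_Iio,
      ← integral_Ici_eq_integral_Ioi, ← integral_indicator measurableSet_Iio,
      ← integral_indicator measurableSet_Ici,
      ← integral_add ((hslice hvl t).indicator measurableSet_Iio)
        ((hslice hvr t).indicator measurableSet_Ici)]
    refine integral_congr_ae (Eventually.of_forall fun y => ?_)
    rcases lt_or_ge y 0 with hy | hy
    · simp only [indicator, mem_Iio, mem_Ici, if_pos hy, if_neg (not_le.2 hy), add_zero]
      exact hGA vl t y (hul t y hy)
    · simp only [indicator, mem_Iio, mem_Ici, if_pos hy, if_neg (not_lt.2 hy), zero_add]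
      exact hGA vr t y (hur t y hy)
  set Q : (ℝ → ℝ → ℝ) → ℝ × ℝ → ℝ := fun v p => (f (W v p) - d p.1 * W v p) * Φ p with hQdef
  have hQC : ∀ {v : ℝ → ℝ → ℝ}, ContDiff ℝ 1 (uncurry v) → ContDiff ℝ 1 (Q v) := fun {v} hv =>
    ((hf.comp (hWC hv)).sub ((hd.comp contDiff_fst).mul (hWC hv))).mul hΦ
  have hQs : ∀ v, HasCompactSupport (Q v) := fun v =>
    HasCompactSupport.mul_left (f := fun p => f (W v p) - d p.1 * W v p) hΦc
  have hPs : ∀ v, HasCompactSupport fun p => W v p * Φ p := fun v =>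
    HasCompactSupport.mul_left (f := W v) hΦc
  have hint1 : Integrable fun t => ∫ y in Iic (0:ℝ), A vl (t, y) :=
    ((hAc hvl).integrable_of_hasCompactSupport (hAs vl)
      (μ := (volume : Measure ℝ).prod (volume.restrict (Iic (0:ℝ))))).integral_prod_left
  have hint2 : Integrable fun t => ∫ y in Ioi (0:ℝ), A vr (t, y) :=
    ((hAc hvr).integrable_of_hasCompactSupport (hAs vr)
      (μ := (volume : Measure ℝ).prod (volume.restrict (Ioi (0:ℝ))))).integral_prod_left
  have e1 : ∫ t, ∫ y in Iic (0:ℝ), A vl (t, y) = ∫ t, Q vl (t, 0) := by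
    rw [← integral_Iic_partial ((hWC hvl).mul hΦ) (hPs vl) (hQC hvl) (hQs vl)]
    refine integral_congr_ae (Eventually.of_forall fun t =>
      setIntegral_congr_fun measurableSet_Iic fun y hy => ?_)
    exact integrand_eq_divergence hf (hWC hvl) hΦ hd fun h =>
      hWpde hvl t y (hl t (hΦ0 t y h) _ (by have := mem_Iic.1 hy; linarith))
  have e2 : ∫ t, ∫ y in Ioi (0:ℝ), A vr (t, y) = -∫ t, Q vr (t, 0) := by
    rw [← integral_Ioi_partial ((hWC hvr).mul hΦ) (hPs vr) (hQC hvr) (hQs vr)]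
    refine integral_congr_ae (Eventually.of_forall fun t =>
      setIntegral_congr_fun measurableSet_Ioi fun y hy => ?_)
    exact integrand_eq_divergence hf (hWC hvr) hΦ hd fun h =>
      hWpde hvr t y (hr t (hΦ0 t y h) _ (by have := mem_Ioi.1 hy; linarith))
  -- Rankine-Hugoniot makes the two boundary fluxes cancel
  have e3 : ∀ t, Q vl (t, 0) = Q vr (t, 0) := fun t => by
    by_cases h : Φ (t, 0) = 0
    · simp only [hQdef, h, mul_zero]
    · have := hRH t (hΦ0 t 0 h)
      simp only [hQdef, hW, hddef, zero_add]
      linear_combination -Φ (t, 0) * this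
  calc ∫ p, G p = ∫ t, ∫ x, G (t, x) := by
        rw [Measure.volume_eq_prod] at hint ⊢
        exact integral_prod _ hint
    _ = ∫ t, ((∫ y in Iic (0:ℝ), A vl (t, y)) + ∫ y in Ioi (0:ℝ), A vr (t, y)) := by
        simp only [hsplit]
    _ = 0 := by
        rw [integral_add hint1 hint2, e1, e2]
        simp only [e3, add_neg_cancel]

/-! ### The Rankine-Hugoniot equation -/

lemma contDiff_deriv_of_two {ψ : ℝ → ℝ} (hψ : ContDiff ℝ 2 ψ) : ContDiff ℝ 1 (deriv ψ) :=
  ((contDiff_succ_iff_deriv (n := 1)).1 (by rw [one_add_one_eq_two]; exact hψ)).2.2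

/-- Global solvability of `ψ' = F (t, ψ)`, `ψ 0 = 0`, for bounded `C¹` functions `F` that are
uniformly Lipschitz in the second variable. -/
lemma exists_global_ode {F : ℝ × ℝ → ℝ} (hF : ContDiff ℝ 1 F) {M K : NNReal}
    (hM : ∀ p, |F p| ≤ M) (hK : ∀ t, LipschitzWith K fun x => F (t, x)) :
    ∃ ψ : ℝ → ℝ, ContDiff ℝ 2 ψ ∧ ψ 0 = 0 ∧ ∀ t, HasDerivAt ψ (F (t, ψ t)) t := by
  have hex : ∀ n : ℕ, ∃ α : ℝ → ℝ, α 0 = 0 ∧ ∀ t ∈ Ioo (-((n:ℝ) + 1)) ((n:ℝ) + 1),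
      HasDerivAt α (F (t, α t)) t := fun n => by
    have hpl : IsPicardLindelof (fun t x => F (t, x)) (tmin := -((n:ℝ) + 1)) (tmax := (n:ℝ) + 1)
        ⟨0, by constructor <;> linarith [(Nat.cast_nonneg n : (0:ℝ) ≤ n)]⟩ (0:ℝ)
        (M * ((n:NNReal) + 1)) 0 M K := by
      refine ⟨fun t _ => (hK t).lipschitzOnWith, fun x _ => ?_, fun t _ x _ => hM _, ?_⟩
      · exact (hF.continuous.comp (by fun_prop : Continuous fun t : ℝ => (t, x))).continuousOn
      · simp
    obtain ⟨α, h0, hα⟩ := hpl.exists_eq_forall_mem_Icc_hasDerivWithinAt₀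
    exact ⟨α, h0, fun t ht => (hα t (Ioo_subset_Icc_self ht)).hasDerivAt (Icc_mem_nhds ht.1 ht.2)⟩
  choose α hα0 hα using hex
  have huniq : ∀ m n : ℕ, m ≤ n → EqOn (α m) (α n) (Ioo (-((m:ℝ) + 1)) ((m:ℝ) + 1)) :=
    fun m n hmn => by
      have hmn' : (m:ℝ) ≤ n := by exact_mod_cast hmn
      refine ODE_solution_unique_of_mem_Ioo (v := fun t x => F (t, x)) (s := fun _ => univ)
        (K := K) (t₀ := 0) (fun t _ => (hK t).lipschitzOnWith) ?_
        (fun t ht => ⟨hα m t ht, mem_univ _⟩)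
        (fun t ht => ⟨hα n t ⟨by linarith [ht.1], by linarith [ht.2]⟩, mem_univ _⟩)
        (by rw [hα0, hα0])
      constructor <;> linarith [(Nat.cast_nonneg m : (0:ℝ) ≤ m)]
  set ψ : ℝ → ℝ := fun t => α ⌈|t|⌉₊ t with hψdef
  have heq : ∀ N : ℕ, ∀ s : ℝ, |s| ≤ N → ψ s = α N s := fun N s hs => by
    have h1 : ⌈|s|⌉₊ ≤ N := Nat.ceil_le.2 hs
    have h2 : |s| < (⌈|s|⌉₊ : ℝ) + 1 := lt_of_le_of_lt (Nat.le_ceil _) (lt_add_one _)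
    exact huniq _ _ h1 ⟨by linarith [(abs_lt.1 h2).1], (abs_lt.1 h2).2⟩
  have hψ : ∀ t, HasDerivAt ψ (F (t, ψ t)) t := fun t => by
    obtain ⟨N, hN⟩ := exists_nat_gt |t|
    have hev : ψ =ᶠ[nhds t] α N := by
      filter_upwards [continuous_abs.continuousAt.eventually (gt_mem_nhds hN)] with s hs
      exact heq N s (le_of_lt hs)
    rw [heq N t hN.le]
    refine HasDerivAt.congr_of_eventuallyEq (hα N t ?_) hev
    have := abs_lt.1 hN
    constructor <;> linarith
  have hd : Differentiable ℝ ψ := fun t => (hψ t).differentiableAt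
  have hderiv : deriv ψ = fun t => F (t, ψ t) := funext fun t => (hψ t).deriv
  have h1 : ContDiff ℝ 1 ψ := by
    rw [contDiff_one_iff_deriv, hderiv]
    exact ⟨hd, hF.continuous.comp (continuous_id.prodMk hd.continuous)⟩
  refine ⟨ψ, ?_, by simp [hψdef, hα0], hψ⟩
  rw [← one_add_one_eq_two, contDiff_succ_iff_deriv]
  refine ⟨hd, by simp, ?_⟩
  rw [hderiv]
  exact hF.comp (contDiff_id.prodMk h1)

lemma exists_bound_on {q : ℝ → ℝ} (hq : Continuous q) (R : ℝ) :
    ∃ M, 0 ≤ M ∧ ∀ x, |x| ≤ R → |q x| ≤ M := by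
  obtain ⟨M, hM⟩ := (isCompact_Icc (a := -R) (b := R)).exists_bound_of_continuousOn hq.continuousOn
  exact ⟨max M 0, le_max_right _ _, fun x hx => (hM x (abs_le.1 hx)).trans (le_max_left _ _)⟩

/-- Bounds for the Rankine-Hugoniot speed as a function of the two traces, near the two
constant states, and for its derivative along a curve of traces. -/
lemma shock_speed {f : ℝ → ℝ} (hf : ContDiff ℝ 1 f) {um up σ η : ℝ} (hη : 0 < η)
    (hη4 : 4 * η ≤ |up - um|) (hσ : f up - f um = σ * (up - um)) :
    ∃ K > (0:ℝ), ∀ a b, |a - um| ≤ η → |b - up| ≤ η → b - a ≠ 0 ∧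
      |(f b - f a) / (b - a) - σ| ≤ K * (|a - um| + |b - up|) ∧
      ∀ a' b', |((deriv f b * b' - deriv f a * a') * (b - a) - (f b - f a) * (b' - a')) /
        (b - a) ^ 2| ≤ K * (|a'| + |b'|) := by
  have hfd : ∀ z, HasDerivAt f (deriv f z) z := fun z =>
    (hf.differentiable (by simp) z).hasDerivAt
  set R := |um| + |up| + η with hR
  obtain ⟨M, hM0, hM⟩ := exists_bound_on (hf.continuous_deriv le_rfl) R
  have hlip : ∀ a b, |a| ≤ R → |b| ≤ R → |f b - f a| ≤ M * |b - a| := fun a b ha hb =>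
    (convex_Icc (-R) R).norm_image_sub_le_of_norm_deriv_le (f := f) (C := M)
      (fun x _ => (hfd x).differentiableAt) (fun x hx => hM x (abs_le.2 hx))
      (abs_le.1 ha) (abs_le.1 hb)
  refine ⟨(M + |σ|) / η + M / η + 1, by positivity, fun a b ha hb => ?_⟩
  have haR : |a| ≤ R := by
    have := abs_add_le (a - um) um
    rw [sub_add_cancel] at this
    have := abs_nonneg up
    linarith
  have hbR : |b| ≤ R := by
    have := abs_add_le (b - up) up
    rw [sub_add_cancel] at this
    have := abs_nonneg um
    linarith
  have hab : 2 * η ≤ |b - a| := by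
    have h1 : |up - um| ≤ |b - a| + |b - up| + |a - um| := by
      have e : up - um = (b - a) - (b - up) + (a - um) := by ring
      rw [e]
      exact (abs_add_le _ _).trans (by linarith [abs_sub (b - a) (b - up)])
    linarith
  have hpos : 0 < |b - a| := by linarith
  have hne : b - a ≠ 0 := abs_pos.1 hpos
  refine ⟨hne, ?_, fun a' b' => ?_⟩
  · have e : (f b - f a) / (b - a) - σ =
        ((f b - f up - σ * (b - up)) - (f a - f um - σ * (a - um))) / (b - a) := by
      rw [eq_div_iff hne, sub_mul, div_mul_cancel₀ _ hne]
      linear_combination hσ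
    rw [e, abs_div, div_le_iff₀ hpos]
    have h1 := hlip up b (by linarith [abs_nonneg um]) hbR
    have h2 := hlip um a (by linarith [abs_nonneg up]) haR
    have h3 : |(f b - f up - σ * (b - up)) - (f a - f um - σ * (a - um))| ≤
        (M + |σ|) * (|a - um| + |b - up|) := by
      have i1 := abs_sub (f b - f up - σ * (b - up)) (f a - f um - σ * (a - um))
      have i2 := abs_sub (f b - f up) (σ * (b - up))
      have i3 := abs_sub (f a - f um) (σ * (a - um))
      rw [abs_mul] at i2 i3
      linarith
    have h4 : (M + |σ|) ≤ ((M + |σ|) / η + M / η + 1) * |b - a| := by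
      have i1 : (M + |σ|) / η * η = M + |σ| := by field_simp
      have i2 : (M + |σ|) / η * η ≤ (M + |σ|) / η * |b - a| :=
        mul_le_mul_of_nonneg_left (by linarith) (by positivity)
      have i3 : 0 ≤ M / η * |b - a| := by positivity
      linarith
    calc _ ≤ (M + |σ|) * (|a - um| + |b - up|) := h3
      _ ≤ (((M + |σ|) / η + M / η + 1) * |b - a|) * (|a - um| + |b - up|) := by gcongr
      _ = _ := by ring
  · rw [abs_div, div_le_iff₀ (by positivity), abs_pow]
    have h1 : |deriv f b * b' - deriv f a * a'| ≤ M * (|a'| + |b'|) := by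
      refine (abs_sub _ _).trans ?_
      rw [abs_mul, abs_mul]
      have i1 := mul_le_mul_of_nonneg_right (hM b hbR) (abs_nonneg b')
      have i2 := mul_le_mul_of_nonneg_right (hM a haR) (abs_nonneg a')
      linarith
    have h2 : |b' - a'| ≤ |a'| + |b'| := (abs_sub _ _).trans (by linarith)
    have h3 := hlip a b haR hbR
    have h4 : |(deriv f b * b' - deriv f a * a') * (b - a) - (f b - f a) * (b' - a')| ≤
        2 * M * (|a'| + |b'|) * |b - a| := by
      refine (abs_sub _ _).trans ?_
      rw [abs_mul, abs_mul]
      have i1 := mul_le_mul_of_nonneg_right h1 (abs_nonneg (b - a))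
      have i2 := mul_le_mul h3 h2 (abs_nonneg _) (by positivity)
      linarith
    have h5 : 2 * M ≤ ((M + |σ|) / η + M / η + 1) * |b - a| := by
      have i1 : M / η * (2 * η) = 2 * M := by field_simp
      have i2 : M / η * (2 * η) ≤ M / η * |b - a| :=
        mul_le_mul_of_nonneg_left hab (by positivity)
      have i3 : 0 ≤ (M + |σ|) / η * |b - a| := by positivity
      linarith
    calc _ ≤ 2 * M * (|a'| + |b'|) * |b - a| := h4
      _ ≤ (((M + |σ|) / η + M / η + 1) * |b - a|) * (|a'| + |b'|) * |b - a| := by gcongr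
      _ = _ := by ring

lemma hasDerivAt_shock_speed {f a b : ℝ → ℝ} (hf : ContDiff ℝ 1 f) {a' b' σ t : ℝ}
    (ha : HasDerivAt a a' t) (hb : HasDerivAt b b' t) (hne : b t - a t ≠ 0) :
    HasDerivAt (fun s => (f (b s) - f (a s)) / (b s - a s) - σ)
      (((deriv f (b t) * b' - deriv f (a t) * a') * (b t - a t) -
        (f (b t) - f (a t)) * (b' - a')) / (b t - a t) ^ 2) t := by
  have hfd : ∀ z, HasDerivAt f (deriv f z) z := fun z =>
    (hf.differentiable (by simp) z).hasDerivAt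
  exact ((((hfd _).comp t hb).sub ((hfd _).comp t ha)).div (hb.sub ha) hne).sub_const σ

/-- The shock curve: given the two smooth branches, the Rankine-Hugoniot ordinary differential
equation has a global `C²` solution. -/
lemma exists_shock {f : ℝ → ℝ} (hf : ContDiff ℝ 1 f) {um up σ η K M : ℝ} (hK : 0 < K)
    (H : ∀ a b, |a - um| ≤ η → |b - up| ≤ η → b - a ≠ 0 ∧
      |(f b - f a) / (b - a) - σ| ≤ K * (|a - um| + |b - up|) ∧
      ∀ a' b', |((deriv f b * b' - deriv f a * a') * (b - a) - (f b - f a) * (b' - a')) /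
        (b - a) ^ 2| ≤ K * (|a'| + |b'|)) {vl vr : ℝ → ℝ → ℝ}
    (hvl : ContDiff ℝ 1 (uncurry vl)) (hvr : ContDiff ℝ 1 (uncurry vr))
    (hbl : ∀ t x, |vl t x - um| ≤ η ∧ |deriv (vl t) x| ≤ M)
    (hbr : ∀ t x, |vr t x - up| ≤ η ∧ |deriv (vr t) x| ≤ M) :
    ∃ ψ : ℝ → ℝ, ContDiff ℝ 2 ψ ∧ ψ 0 = 0 ∧ ∀ t, HasDerivAt ψ
      ((f (vr t (ψ t)) - f (vl t (ψ t))) / (vr t (ψ t) - vl t (ψ t)) - σ) t := by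
  have hη0 : 0 ≤ η := (abs_nonneg _).trans (hbl 0 0).1
  have hM0 : 0 ≤ M := (abs_nonneg _).trans (hbl 0 0).2
  have hne : ∀ t x, vr t x - vl t x ≠ 0 := fun t x => (H _ _ (hbl t x).1 (hbr t x).1).1
  set F : ℝ × ℝ → ℝ := fun p =>
    (f (uncurry vr p) - f (uncurry vl p)) / (uncurry vr p - uncurry vl p) - σ with hFdef
  have hF : ContDiff ℝ 1 F :=
    (((hf.comp hvr).sub (hf.comp hvl)).div (hvr.sub hvl) fun p => hne p.1 p.2).sub contDiff_const
  have hvd : ∀ {v : ℝ → ℝ → ℝ}, ContDiff ℝ 1 (uncurry v) → ∀ t x,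
      HasDerivAt (v t) (deriv (v t) x) x := fun {v} hv t x =>
    (hasDerivAt_snd_of_contDiff hv t x).differentiableAt.hasDerivAt
  refine exists_global_ode hF (M := (K * (2 * η)).toNNReal) (K := (K * (2 * M)).toNNReal)
    (fun p => ?_) fun t => ?_
  · have h1 := hbl p.1 p.2
    have h2 := hbr p.1 p.2
    refine (H _ _ h1.1 h2.1).2.1.trans ?_
    rw [Real.coe_toNNReal _ (by positivity)]
    gcongr
    linarith [h1.1, h2.1]
  · have hd : ∀ x, HasDerivAt (fun x => F (t, x)) _ x := fun x => hasDerivAt_shock_speed hf (σ := σ) (hvd hvl t x) (hvd hvr t x) (hne t x)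
    refine lipschitzWith_of_nnnorm_deriv_le (fun x => (hd x).differentiableAt) fun x => ?_
    rw [(hd x).deriv, ← NNReal.coe_le_coe, coe_nnnorm]
    refine ((H _ _ (hbl t x).1 (hbr t x).1).2.2 _ _).trans ?_
    rw [Real.coe_toNNReal _ (by positivity)]
    gcongr
    linarith [(hbl t x).2, (hbr t x).2]

/-- The equation controls the time derivative by the distance to the equilibrium and the space
derivative. -/
lemma exists_time_deriv_bound {f g : ℝ → ℝ} (hf : ContDiff ℝ 1 f) (hg : ContDiff ℝ 1 g)
    {a : ℝ} (hga : g a = 0) (σ η : ℝ) :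
    ∃ K > (0:ℝ), ∀ v vt vx, |v - a| ≤ η → vt + (deriv f v - σ) * vx = g v →
      |vt| ≤ K * (|v - a| + |vx|) := by
  have hgd : ∀ z, HasDerivAt g (deriv g z) z := fun z =>
    (hg.differentiable (by simp) z).hasDerivAt
  obtain ⟨M, hM0, hM⟩ := exists_bound_on (hf.continuous_deriv le_rfl) (|a| + η)
  obtain ⟨N, hN0, hN⟩ := exists_bound_on (hg.continuous_deriv le_rfl) (|a| + η)
  refine ⟨M + |σ| + N + 1, by positivity, fun v vt vx hv h => ?_⟩
  have hη : 0 ≤ η := (abs_nonneg _).trans hv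
  have hvR : |v| ≤ |a| + η := by
    have := abs_add_le (v - a) a
    rw [sub_add_cancel] at this
    linarith
  have h1 : |g v - g a| ≤ N * |v - a| :=
    (convex_Icc (-(|a| + η)) (|a| + η)).norm_image_sub_le_of_norm_deriv_le (f := g) (C := N)
      (fun x _ => (hgd x).differentiableAt) (fun x hx => hN x (abs_le.2 hx))
      (abs_le.1 (by linarith)) (abs_le.1 hvR)
  rw [hga, sub_zero] at h1
  have h2 : vt = g v - (deriv f v - σ) * vx := by linarith
  have h3 : |vt| ≤ |g v| + (M + |σ|) * |vx| := by
    rw [h2]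
    refine (abs_sub _ _).trans ?_
    rw [abs_mul]
    gcongr
    exact (abs_sub _ _).trans (by linarith [hM v hvR])
  have := abs_nonneg vx
  have := abs_nonneg (v - a)
  have := abs_nonneg σ
  nlinarith

/-! ### Initial perturbations and the limit position of the shock -/

lemma weight_antitone {ρ : ℝ → ℝ} (hρ : IsSubExpWeight ρ) {κ : ℝ} (hκ : 0 ≤ κ) :
    Antitone fun x => ρ (max x 0) * Real.exp (-(κ * max x 0)) := fun x y hxy => by
  have h : max x 0 ≤ max y 0 := max_le_max hxy le_rfl
  refine mul_le_mul (hρ.2.1 _ _ (le_max_right _ _) h) ?_ (Real.exp_pos _).le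
    (hρ.1 _ (le_max_right _ _)).le
  rw [Real.exp_le_exp]
  linarith [mul_le_mul_of_nonneg_left h hκ]

/-- The initial perturbation on `x > 0`, extended to the line. -/
lemma exists_data_right {u0 ub ρ Q : ℝ → ℝ} {up κ E : ℝ} (hρ : IsSubExpWeight ρ) (hκ : 0 ≤ κ)
    (hQ : Q = fun x => ρ (max x 0) * Real.exp (-(κ * max x 0))) (hub : ∀ x, 0 < x → ub x = up)
    (hu0 : ContDiffOn ℝ 1 u0 {x : ℝ | x ≠ 0})
    (h1 : IsBUCOn (fun x => (u0 x - ub x) / Q x) (Ioi 0))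
    (h2 : IsBUCOn (fun x => deriv (fun y => u0 y - ub y) x / Q x) (Ioi 0))
    (hE : ∀ x : ℝ, x ≠ 0 → max |u0 x - ub x| |deriv (fun y => u0 y - ub y) x| ≤ E * Q x) :
    ∃ W : ℝ → ℝ, ContDiff ℝ 1 W ∧ (∀ x, 0 < x → up + W x = u0 x) ∧
      ∀ x, |W x| ≤ 2 * E * (ρ (max x 0) * Real.exp (-(κ * max x 0))) ∧
        |deriv W x| ≤ 2 * E * (ρ (max x 0) * Real.exp (-(κ * max x 0))) := by
  subst hQ
  have hw : ContDiffOn ℝ 1 (fun y => u0 y - ub y) (Ioi 0) :=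
    ((hu0.mono fun x hx => (mem_Ioi.1 hx).ne').sub (contDiffOn_const (c := up))).congr
      fun x hx => by simp only [hub x hx]
  obtain ⟨W, hW, hWp, hWb⟩ := exists_data hw (weight_antitone hρ hκ)
    (fun x => mul_pos (hρ.1 _ (le_max_right _ _)) (Real.exp_pos _))
    (fun x hx => by simp [max_eq_right hx]) h1.2 h2.2 fun x hx => hE x hx.ne'
  exact ⟨W, hW, fun x hx => by rw [hWp x hx, hub x hx]; ring, hWb⟩

/-- The initial perturbation on `x < 0`, extended to the line; here the weight is constant, and
the extension is that of the reflected function. -/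
lemma exists_data_left {u0 ub ρ Q : ℝ → ℝ} {um κ E : ℝ} (hρ : IsSubExpWeight ρ)
    (hQ : Q = fun x => ρ (max x 0) * Real.exp (-(κ * max x 0))) (hub : ∀ x, x < 0 → ub x = um)
    (hu0 : ContDiffOn ℝ 1 u0 {x : ℝ | x ≠ 0})
    (h1 : IsBUCOn (fun x => (u0 x - ub x) / Q x) (Iio 0))
    (h2 : IsBUCOn (fun x => deriv (fun y => u0 y - ub y) x / Q x) (Iio 0))
    (hE : ∀ x : ℝ, x ≠ 0 → max |u0 x - ub x| |deriv (fun y => u0 y - ub y) x| ≤ E * Q x) :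
    ∃ W : ℝ → ℝ, ContDiff ℝ 1 W ∧ (∀ x, x < 0 → um + W x = u0 x) ∧
      ∀ x, |W x| ≤ 2 * E * ρ 0 ∧ |deriv W x| ≤ 2 * E * ρ 0 := by
  have hQn : ∀ x, 0 < x → Q (-x) = ρ 0 := fun x hx => by
    rw [hQ]; simp [max_eq_right (neg_nonpos.2 hx.le)]
  set w : ℝ → ℝ := fun y => u0 y - ub y with hwdef
  have hd : ∀ x, deriv (fun y => w (-y)) x = -deriv w (-x) := fun x => deriv_comp_neg w x
  have hneg : MapsTo (fun x : ℝ => -x) (Ioi 0) (Iio 0) := fun x hx => by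
    have := mem_Ioi.1 hx
    simpa using this
  have huc : ∀ {p : ℝ → ℝ}, UniformContinuousOn p (Iio 0) →
      UniformContinuousOn (fun x => p (-x)) (Ioi 0) := fun {p} hp =>
    hp.comp uniformContinuous_neg.uniformContinuousOn hneg
  have hw : ContDiffOn ℝ 1 (fun y => w (-y)) (Ioi 0) := by
    have h3 : ContDiffOn ℝ 1 w (Iio 0) :=
      ((hu0.mono fun x hx => (mem_Iio.1 hx).ne).sub (contDiffOn_const (c := um))).congr
        fun x hx => by simp only [hwdef, hub x hx]
    exact h3.comp contDiff_neg.contDiffOn hneg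
  obtain ⟨W, hW, hWp, hWb⟩ := exists_data (Q := fun _ => ρ 0) (E := E) hw (fun _ _ _ => le_rfl)
    (fun x => hρ.1 _ le_rfl) (fun x hx => rfl)
    ((huc h1.2).congr fun x hx => by simp only [hQn x hx]; rfl)
    ((uniformContinuous_neg.comp_uniformContinuousOn (huc h2.2)).congr fun x hx => by
      simp only [Function.comp_apply, hQn x hx, hd, neg_div])
    fun x hx => by
      have := hE (-x) (neg_ne_zero.2 hx.ne')
      rw [hQn x hx] at this
      rwa [hd, abs_neg]
  refine ⟨fun x => W (-x), hW.comp contDiff_neg, fun x hx => ?_, fun x => ⟨(hWb (-x)).1, ?_⟩⟩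
  · simp only [hWp (-x) (by linarith), neg_neg, hwdef, hub x hx]; ring
  · rw [deriv_comp_neg, abs_neg]; exact (hWb (-x)).2

/-- A position whose speed is controlled by an integrable weight converges, with the rate given by
the tail of the weight. -/
lemma exists_limit {ψ ρ : ℝ → ℝ} {P θ : ℝ} (hψ : ContDiff ℝ 1 ψ) (hψ0 : ψ 0 = 0) (hθ : 0 < θ)
    (hρint : IntegrableOn ρ (Ici 0))
    (hb : ∀ t, 0 ≤ t → |deriv ψ t| ≤ P * ρ (θ * t)) :
    (∀ t, 0 ≤ t → |ψ t| ≤ P / θ * ∫ s in Ioi 0, ρ s) ∧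
    ∃ ψinf : ℝ, |ψinf| ≤ P / θ * ∫ s in Ioi 0, ρ s ∧
      ∀ t, 0 ≤ t → |ψ t - ψinf| ≤ P / θ * ∫ s in Ioi (θ * t), ρ s := by
  have hcont : Continuous (deriv ψ) := hψ.continuous_deriv le_rfl
  have hρ' : IntegrableOn (fun s => P * ρ (θ * s)) (Ioi 0) := by
    refine Integrable.const_mul ?_ P
    have := (integrableOn_Ioi_comp_mul_left_iff ρ 0 hθ).2 (by
      rw [mul_zero]; exact hρint.mono_set Ioi_subset_Ici_self)
    exact this
  have hint : IntegrableOn (deriv ψ) (Ioi 0) := by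
    refine Integrable.mono' hρ' hcont.aestronglyMeasurable ?_
    filter_upwards [ae_restrict_mem measurableSet_Ioi] with s hs
    exact hb s (le_of_lt hs)
  have htail : ∀ t, 0 ≤ t → |∫ s in Ioi t, deriv ψ s| ≤ P / θ * ∫ s in Ioi (θ * t), ρ s :=
    fun t ht => by
      have h1 : |∫ s in Ioi t, deriv ψ s| ≤ ∫ s in Ioi t, P * ρ (θ * s) := by
        rw [← Real.norm_eq_abs]
        refine norm_integral_le_of_norm_le (hρ'.mono_set (Ioi_subset_Ioi ht)) ?_
        filter_upwards [ae_restrict_mem measurableSet_Ioi] with s hs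
        exact hb s (ht.trans (le_of_lt hs))
      refine h1.trans (le_of_eq ?_)
      rw [integral_const_mul, integral_comp_mul_left_Ioi ρ t hθ, smul_eq_mul]
      ring
  have hFTC : ∀ t, ∫ s in (0:ℝ)..t, deriv ψ s = ψ t := fun t => by
    rw [intervalIntegral.integral_eq_sub_of_hasDerivAt
      (fun x _ => (hψ.differentiable (by simp) x).hasDerivAt) (hcont.intervalIntegrable _ _),
      hψ0, sub_zero]
  refine ⟨fun t ht => ?_, ∫ s in Ioi 0, deriv ψ s, ?_, fun t ht => ?_⟩
  · have h1 : |∫ s in (0:ℝ)..t, deriv ψ s| ≤ ∫ s in (0:ℝ)..t, P * ρ (θ * s) := by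
      rw [← Real.norm_eq_abs]
      refine intervalIntegral.norm_integral_le_of_norm_le ht ?_ ?_
      · filter_upwards with s hs using hb s (le_of_lt hs.1)
      · rw [intervalIntegrable_iff_integrableOn_Ioc_of_le ht]
        exact hρ'.mono_set Ioc_subset_Ioi_self
    rw [hFTC] at h1
    refine h1.trans ?_
    rw [intervalIntegral.integral_of_le ht]
    have h2 : ∫ s in Ioc 0 t, P * ρ (θ * s) ≤ ∫ s in Ioi 0, P * ρ (θ * s) := by
      refine setIntegral_mono_set hρ' ?_ (LE.le.eventuallyLE Ioc_subset_Ioi_self)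
      filter_upwards [ae_restrict_mem measurableSet_Ioi] with s hs
      exact (abs_nonneg _).trans (hb s (le_of_lt hs))
    refine h2.trans (le_of_eq ?_)
    rw [integral_const_mul, integral_comp_mul_left_Ioi ρ 0 hθ, smul_eq_mul, mul_zero]
    ring
  · simpa using htail 0 le_rfl
  · have h1 := intervalIntegral.integral_interval_add_Ioi' (a := 0) (b := t)
      (hcont.intervalIntegrable (μ := volume) 0 t) (hint.mono_set (Ioi_subset_Ioi ht))
    rw [hFTC] at h1
    rw [← h1]
    have e : ψ t - (ψ t + ∫ s in Ioi t, deriv ψ s) = -∫ s in Ioi t, deriv ψ s := by ring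
    rw [e, abs_neg]
    exact htail t ht

/-! ### The glued solution -/

/-- Two profiles `vl` and `vr`, written in the frame moving with speed `σ`, glued along the curve
`x = σ t + ψ t`. -/
noncomputable def glue (σ : ℝ) (ψ : ℝ → ℝ) (vl vr : ℝ → ℝ → ℝ) (t x : ℝ) : ℝ :=
  if x < σ * t + ψ t then vl t (x - σ * t) else vr t (x - σ * t)

lemma glue_left {σ : ℝ} {ψ : ℝ → ℝ} {vl vr : ℝ → ℝ → ℝ} {t x : ℝ} (hx : x < σ * t + ψ t) :
    glue σ ψ vl vr t x = vl t (x - σ * t) := if_pos hx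

lemma glue_right {σ : ℝ} {ψ : ℝ → ℝ} {vl vr : ℝ → ℝ → ℝ} {t x : ℝ} (hx : σ * t + ψ t ≤ x) :
    glue σ ψ vl vr t x = vr t (x - σ * t) := if_neg hx.not_gt

lemma deriv_glue_left {σ : ℝ} {ψ : ℝ → ℝ} {vl vr : ℝ → ℝ → ℝ} {t x : ℝ} (hx : x < σ * t + ψ t) :
    deriv (glue σ ψ vl vr t) x = deriv (vl t) (x - σ * t) := by
  have h : glue σ ψ vl vr t =ᶠ[nhds x] fun y => vl t (y - σ * t) := by
    filter_upwards [Iio_mem_nhds hx] with y hy using glue_left hy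
  rw [h.deriv_eq, deriv_comp_sub_const]

lemma deriv_glue_right {σ : ℝ} {ψ : ℝ → ℝ} {vl vr : ℝ → ℝ → ℝ} {t x : ℝ}
    (hx : σ * t + ψ t < x) :
    deriv (glue σ ψ vl vr t) x = deriv (vr t) (x - σ * t) := by
  have h : glue σ ψ vl vr t =ᶠ[nhds x] fun y => vr t (y - σ * t) := by
    filter_upwards [Ioi_mem_nhds hx] with y hy using glue_right (mem_Ioi.1 hy).le
  rw [h.deriv_eq, deriv_comp_sub_const]

lemma contDiffOn_glue {σ : ℝ} {ψ : ℝ → ℝ} {vl vr : ℝ → ℝ → ℝ} (hψ : Continuous ψ)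
    (hvl : ContDiff ℝ 1 (uncurry vl)) (hvr : ContDiff ℝ 1 (uncurry vr)) :
    ContDiffOn ℝ 1 (uncurry (glue σ ψ vl vr))
      {p : ℝ × ℝ | 0 ≤ p.1 ∧ p.2 ≠ σ * p.1 + ψ p.1} := by
  have hc : Continuous fun p : ℝ × ℝ => σ * p.1 + ψ p.1 := by fun_prop
  have hs : ContDiff ℝ 1 fun p : ℝ × ℝ => (p.1, p.2 - σ * p.1) := by fun_prop
  rintro p ⟨-, hp⟩
  refine ContDiffAt.contDiffWithinAt ?_
  rcases lt_or_gt_of_ne hp with h | h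
  · refine (hvl.comp hs).contDiffAt.congr_of_eventuallyEq ?_
    filter_upwards [(isOpen_lt continuous_snd hc).mem_nhds h] with q hq using glue_left hq
  · refine (hvr.comp hs).contDiffAt.congr_of_eventuallyEq ?_
    filter_upwards [(isOpen_lt hc continuous_snd).mem_nhds h] with q hq
      using glue_right (le_of_lt hq)

/-- The glued function attains its initial data in `L¹_loc`, by dominated convergence. -/
lemma tendsto_glue {σ M : ℝ} {ψ u0 : ℝ → ℝ} {vl vr : ℝ → ℝ → ℝ} (hψ : Continuous ψ)
    (hψ0 : ψ 0 = 0) (hvl : Continuous (uncurry vl)) (hvr : Continuous (uncurry vr))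
    (hl : ∀ x, x < 0 → vl 0 x = u0 x) (hr : ∀ x, 0 < x → vr 0 x = u0 x)
    (hM : ∀ t x, |glue σ ψ vl vr t x| ≤ M) {K : Set ℝ} (hK : IsCompact K) :
    Tendsto (fun t => ∫ x in K, |glue σ ψ vl vr t x - u0 x|)
      (nhdsWithin 0 (Ioi 0)) (nhds 0) := by
  have hne : ∀ᵐ x : ℝ ∂volume.restrict K, x ≠ 0 :=
    ae_restrict_of_ae (by simp [ae_iff, measure_singleton])
  have hmeas : ∀ t, Measurable (glue σ ψ vl vr t) := fun t => by
    refine Measurable.ite measurableSet_Iio ?_ ?_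
    · exact (hvl.comp (by fun_prop : Continuous fun x : ℝ => (t, x - σ * t))).measurable
    · exact (hvr.comp (by fun_prop : Continuous fun x : ℝ => (t, x - σ * t))).measurable
  have h0 : ∀ x, x ≠ 0 → glue σ ψ vl vr 0 x = u0 x := fun x hx => by
    rcases lt_or_gt_of_ne hx with h | h
    · rw [glue_left (by rw [hψ0]; simpa using h), mul_zero, sub_zero, hl x h]
    · rw [glue_right (by rw [hψ0]; simpa using h.le), mul_zero, sub_zero, hr x h]
  have hpt : ∀ x, x ≠ 0 → Tendsto (fun t => glue σ ψ vl vr t x) (nhds 0) (nhds (u0 x)) :=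
    fun x hx => by
      have hc : Continuous fun t : ℝ => σ * t + ψ t := by fun_prop
      rcases lt_or_gt_of_ne hx with h | h
      · have h1 : Tendsto (fun t => vl t (x - σ * t)) (nhds 0) (nhds (u0 x)) := by
          have h2 := (hvl.comp (by fun_prop : Continuous fun t : ℝ => (t, x - σ * t))).tendsto 0
          simpa [Function.comp_def, uncurry, hl x h] using h2
        refine h1.congr' ?_
        filter_upwards [(isOpen_lt continuous_const hc).mem_nhds
          (show x < σ * 0 + ψ 0 by rw [hψ0]; simpa using h)] with t ht using (glue_left ht).symm
      · have h1 : Tendsto (fun t => vr t (x - σ * t)) (nhds 0) (nhds (u0 x)) := by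
          have h2 := (hvr.comp (by fun_prop : Continuous fun t : ℝ => (t, x - σ * t))).tendsto 0
          simpa [Function.comp_def, uncurry, hr x h] using h2
        refine h1.congr' ?_
        filter_upwards [(isOpen_lt hc continuous_const).mem_nhds
          (show σ * 0 + ψ 0 < x by rw [hψ0]; simpa using h)] with t ht
          using (glue_right (le_of_lt ht)).symm
  have hKfin : volume K ≠ ⊤ := hK.measure_lt_top.ne
  have h1 : Tendsto (fun t => ∫ x in K, |glue σ ψ vl vr t x - glue σ ψ vl vr 0 x|)
      (nhdsWithin 0 (Ioi 0)) (nhds (∫ x in K, (0:ℝ))) := by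
    refine tendsto_integral_filter_of_dominated_convergence (fun _ => M + M) ?_ ?_ ?_ ?_
    · filter_upwards with t
      exact ((hmeas t).sub (hmeas 0)).abs.aestronglyMeasurable
    · filter_upwards with t
      filter_upwards with x
      rw [Real.norm_eq_abs, abs_abs]
      exact (abs_sub _ _).trans (add_le_add (hM t x) (hM 0 x))
    · exact integrableOn_const hKfin
    · filter_upwards [hne] with x hx
      have h2 := ((hpt x hx).mono_left (nhdsWithin_le_nhds (s := Ioi 0))).sub_const
        (glue σ ψ vl vr 0 x)
      rw [h0 x hx] at h2 ⊢
      simpa using h2.abs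
  rw [integral_zero] at h1
  refine h1.congr fun t => integral_congr_ae ?_
  filter_upwards [hne] with x hx
  rw [h0 x hx]

/-- Decay of the speed and of the acceleration of a curve solving the Rankine-Hugoniot equation,
when both traces and their derivatives are of size `A`. -/
lemma shock_deriv_bounds {f g : ℝ → ℝ} (hf : ContDiff ℝ 1 f) {um up σ η Ks Tl Tr A t : ℝ}
    (hKs : 0 < Ks) (hTl : 0 < Tl) (hTr : 0 < Tr)
    (H : ∀ a b, |a - um| ≤ η → |b - up| ≤ η → b - a ≠ 0 ∧
      |(f b - f a) / (b - a) - σ| ≤ Ks * (|a - um| + |b - up|) ∧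
      ∀ a' b', |((deriv f b * b' - deriv f a * a') * (b - a) - (f b - f a) * (b' - a')) /
        (b - a) ^ 2| ≤ Ks * (|a'| + |b'|))
    (HTl : ∀ v vt vx, |v - um| ≤ η → vt + (deriv f v - σ) * vx = g v →
      |vt| ≤ Tl * (|v - um| + |vx|))
    (HTr : ∀ v vt vx, |v - up| ≤ η → vt + (deriv f v - σ) * vx = g v →
      |vt| ≤ Tr * (|v - up| + |vx|))
    {vl vr : ℝ → ℝ → ℝ} {ψ : ℝ → ℝ} (hvl : ContDiff ℝ 1 (uncurry vl))
    (hvr : ContDiff ℝ 1 (uncurry vr))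
    (hbl : ∀ t x, |vl t x - um| ≤ η) (hbr : ∀ t x, |vr t x - up| ≤ η)
    (hψ : ∀ t, HasDerivAt ψ
      ((f (vr t (ψ t)) - f (vl t (ψ t))) / (vr t (ψ t) - vl t (ψ t)) - σ) t)
    (hl : |vl t (ψ t) - um| ≤ A ∧ |deriv (vl t) (ψ t)| ≤ A)
    (hr : |vr t (ψ t) - up| ≤ A ∧ |deriv (vr t) (ψ t)| ≤ A)
    (hpl : deriv (fun s => vl s (ψ t)) t + (deriv f (vl t (ψ t)) - σ) * deriv (vl t) (ψ t)
      = g (vl t (ψ t)))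
    (hpr : deriv (fun s => vr s (ψ t)) t + (deriv f (vr t (ψ t)) - σ) * deriv (vr t) (ψ t)
      = g (vr t (ψ t)))
    (h1 : 2 * Ks * A ≤ 1) :
    |deriv ψ t| ≤ 2 * Ks * A ∧ |deriv (deriv ψ) t| ≤ Ks * (2 * Tl + 2 * Tr + 2) * A := by
  have hA : 0 ≤ A := (abs_nonneg _).trans hl.1
  have hψ1 : |deriv ψ t| ≤ 2 * Ks * A := by
    rw [(hψ t).deriv]
    refine (H _ _ (hbl t _) (hbr t _)).2.1.trans ?_
    have := mul_le_mul_of_nonneg_left (add_le_add hl.1 hr.1) hKs.le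
    linarith
  refine ⟨hψ1, ?_⟩
  have key : ∀ {v : ℝ → ℝ → ℝ} {a T : ℝ}, ContDiff ℝ 1 (uncurry v) → 0 < T →
      (∀ v vt vx, |v - a| ≤ η → vt + (deriv f v - σ) * vx = g v → |vt| ≤ T * (|v - a| + |vx|)) →
      |v t (ψ t) - a| ≤ η → |v t (ψ t) - a| ≤ A ∧ |deriv (v t) (ψ t)| ≤ A →
      deriv (fun s => v s (ψ t)) t + (deriv f (v t (ψ t)) - σ) * deriv (v t) (ψ t)
        = g (v t (ψ t)) →
      ∃ d, HasDerivAt (fun s => v s (ψ s)) d t ∧ |d| ≤ (2 * T + 1) * A := by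
    intro v a T hv hT HT hη hb hp
    refine ⟨_, hasDerivAt_along hv (hψ t), ?_⟩
    have e1 : deriv (fun s => v s (ψ t)) t = fderiv ℝ (uncurry v) (t, ψ t) (1, 0) :=
      (hasDerivAt_fst_of_contDiff hv t (ψ t)).deriv
    have e2 : deriv (v t) (ψ t) = fderiv ℝ (uncurry v) (t, ψ t) (0, 1) :=
      (hasDerivAt_snd_of_contDiff hv t (ψ t)).deriv
    rw [← e1, ← e2, ← (hψ t).deriv]
    have h2 := HT _ _ _ hη hp
    have h3 : |deriv ψ t * deriv (v t) (ψ t)| ≤ 1 * A := by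
      rw [abs_mul]
      exact mul_le_mul (hψ1.trans h1) hb.2 (abs_nonneg _) zero_le_one
    have h4 := mul_le_mul_of_nonneg_left (add_le_add hb.1 hb.2) hT.le
    refine (abs_add_le _ _).trans ?_
    linarith
  obtain ⟨a', ha', hab⟩ := key hvl hTl HTl (hbl t _) hl hpl
  obtain ⟨b', hb', hbb⟩ := key hvr hTr HTr (hbr t _) hr hpr
  have hH := H _ _ (hbl t (ψ t)) (hbr t (ψ t))
  have hfun : deriv ψ = fun s =>
      (f (vr s (ψ s)) - f (vl s (ψ s))) / (vr s (ψ s) - vl s (ψ s)) - σ :=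
    funext fun s => (hψ s).deriv
  rw [hfun, (hasDerivAt_shock_speed hf (σ := σ) ha' hb' hH.1).deriv]
  refine (hH.2.2 a' b').trans ?_
  have := mul_le_mul_of_nonneg_left (add_le_add hab hbb) hKs.le
  linarith

/-! ### The stability theorem -/

/-- **Asymptotic stability of monostable Riemann shocks under integrably localized
perturbations** (Theorem "Riemann"): with the critical weight `Ω` and the extra
integrable sub-exponential localization `ρ`, perturbations of the Riemann shock decay
at rate `ρ(θt)`, with a shock location `ψ(t)` converging to some `ψ_∞`. -/
theorem stmt_15
    (f g : ℝ → ℝ) (hf : ContDiff ℝ (⊤ : ℕ∞) f) (hg : ContDiff ℝ (⊤ : ℕ∞) g)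
    (um up : ℝ) (hne : um ≠ up)
    (hgum : g um = 0) (hgup : g up = 0)
    (hg'um : deriv g um < 0) (hg'up : 0 < deriv g up)
    (σ : ℝ) (hσ : σ = (f up - f um) / (up - um))
    (hOl1 : σ < deriv f um) (hOl2 : deriv f up < σ)
    (hOl3 : ∀ v, min um up < v → v < max um up →
      σ < (f v - f um) / (v - um) ∧ (f v - f up) / (v - up) < σ)
    (ub : ℝ → ℝ) (hub : ub = fun x => if x < 0 then um else up)
    (κp : ℝ) (hκp : κp = deriv g up / (σ - deriv f up))
    (ρ : ℝ → ℝ) (hρ : IsSubExpWeight ρ) (hρint : IntegrableOn ρ (Ici 0))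
    (Om Omρ : ℝ → ℝ)
    (hOm : Om = fun x => Real.exp (-(κp * max x 0)))
    (hOmρ : Omρ = fun x => ρ (max x 0) * Real.exp (-(κp * max x 0))) :
    ∃ C > (0:ℝ), ∃ θ > (0:ℝ), ∃ δ0 > (0:ℝ),
      ∀ u0 : ℝ → ℝ, ContDiffOn ℝ 1 u0 {x : ℝ | x ≠ 0} →
        IsBUCOn (fun x => (u0 x - ub x) / Omρ x) (Iio 0) →
        IsBUCOn (fun x => (u0 x - ub x) / Omρ x) (Ioi 0) →
        IsBUCOn (fun x => deriv (fun y => u0 y - ub y) x / Omρ x) (Iio 0) →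
        IsBUCOn (fun x => deriv (fun y => u0 y - ub y) x / Omρ x) (Ioi 0) →
        ∀ E0 : ℝ,
          (∀ x : ℝ, x ≠ 0 →
            max |u0 x - ub x| |deriv (fun y => u0 y - ub y) x| ≤ E0 * Omρ x) →
          E0 ≤ δ0 →
          ∃ ψ : ℝ → ℝ, ContDiff ℝ 2 ψ ∧ ψ 0 = 0 ∧
          ∃ u : ℝ → ℝ → ℝ,
            (∃ M, ∀ t x : ℝ, |u t x| ≤ M) ∧
            IsWeakSol f g u ∧
            (∀ K : Set ℝ, IsCompact K →
              Tendsto (fun t => ∫ x in K, |u t x - u0 x|)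
                (nhdsWithin 0 (Ioi 0)) (nhds 0)) ∧
            ContDiffOn ℝ 1 (uncurry u)
              {p : ℝ × ℝ | 0 ≤ p.1 ∧ p.2 ≠ σ * p.1 + ψ p.1} ∧
            (∀ t, 0 ≤ t → ∀ x : ℝ, x ≠ 0 →
              (max |u t (x + σ * t + ψ t) - ub x| |deriv (u t) (x + σ * t + ψ t)|) / Om x
                + |deriv ψ t| + |deriv (deriv ψ) t|
                ≤ C * E0 * ρ (θ * t)) ∧
            ∃ ψinf : ℝ, |ψinf| ≤ C * E0 ∧
              ∀ t, 0 ≤ t → |ψ t - ψinf| ≤ C * E0 * ∫ s in Ioi (θ * t), ρ s := by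
  have hf1 : ContDiff ℝ 1 f := hf.of_le (by exact_mod_cast le_top)
  have hg1 : ContDiff ℝ 1 g := hg.of_le (by exact_mod_cast le_top)
  have hne' : up - um ≠ 0 := sub_ne_zero.2 hne.symm
  have hσ' : f up - f um = σ * (up - um) := by rw [hσ, div_mul_cancel₀ _ hne']
  have hκ : 0 ≤ κp := by rw [hκp]; exact (div_pos hg'up (sub_pos.2 hOl2)).le
  set η := |up - um| / 4 with hηdef
  have hη : 0 < η := by have := abs_pos.2 hne'; positivity
  obtain ⟨Ks, hKs, HKs⟩ := shock_speed hf1 hη (le_of_eq (by rw [hηdef]; ring)) hσ'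
  obtain ⟨Kr, hKr, θr, hθr, δr, hδr, HR⟩ := right_sol hf hg hgup hg'up hOl2 hκp hρ
  obtain ⟨Kl, hKl, θl, hθl, δl, hδl, HL⟩ := left_sol (σ := σ) hf hg hgum hg'um hρ
  obtain ⟨Tl, hTl, HTl⟩ := exists_time_deriv_bound hf1 hg1 hgum σ η
  obtain ⟨Tr, hTr, HTr⟩ := exists_time_deriv_bound hf1 hg1 hgup σ η
  have hρ0 : 0 < ρ 0 := hρ.1 0 le_rfl
  set θ := min θr θl with hθdef
  have hθ : 0 < θ := lt_min hθr hθl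
  set J := ∫ s in Ioi 0, ρ s with hJdef
  have hJ : 0 ≤ J := setIntegral_nonneg measurableSet_Ioi fun s hs => (hρ.1 s (le_of_lt hs)).le
  set N := 2 * Kr + 2 * Kl * ρ 0 with hNdef
  have hN : 0 < N := by positivity
  -- `1 / D` meets all the smallness conditions on the data at once, one for each term of `D`
  set D := 2 / δr + 2 * ρ 0 / δl + N / η + 2 * Ks * N * ρ 0 + 8 * Ks * N * J / θ + 1 with hDdef
  have hD : 0 < D := by positivity
  have hq1 : 0 ≤ 2 / δr := by positivity
  have hq2 : 0 ≤ 2 * ρ 0 / δl := by positivity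
  have hq3 : 0 ≤ N / η := by positivity
  have hq4 : 0 ≤ 2 * Ks * N * ρ 0 := by positivity
  have hq5 : 0 ≤ 8 * Ks * N * J / θ := by positivity
  set S := 2 * Ks + Ks * (2 * Tl + 2 * Tr + 2) with hSdef
  have hS : 0 < S := by positivity
  have hC1 : 0 ≤ (1 + S) * N := by positivity
  have hC2 : 0 ≤ 2 * Ks * N * J / θ := by positivity
  have hC3 : 0 ≤ 2 * Ks * N / θ := by positivity
  set C := (1 + S) * N + 2 * Ks * N * J / θ + 2 * Ks * N / θ + 1 with hCdef
  have hC : 0 < C := by positivity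
  refine ⟨C, hC, θ, hθ, 1 / D, by positivity, fun u0 hu0 b1 b2 b3 b4 E0 hE hE0 => ?_⟩
  have hub0 : ∀ x, x < 0 → ub x = um := fun x hx => by rw [hub]; exact if_pos hx
  have hub1 : ∀ x, 0 < x → ub x = up := fun x hx => by rw [hub]; exact if_neg hx.not_gt
  have hE0' : 0 ≤ E0 := by
    have h1 := hE 1 one_ne_zero
    have h2 : 0 < Omρ 1 := by
      rw [hOmρ]; exact mul_pos (hρ.1 _ (le_max_right _ _)) (Real.exp_pos _)
    exact nonneg_of_mul_nonneg_left (((abs_nonneg _).trans (le_max_left _ _)).trans h1) h2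
  have hsmall : ∀ q, q ≤ D → q * E0 ≤ 1 := fun q hq => by
    have h1 : E0 * D ≤ 1 := (le_div_iff₀ hD).1 hE0
    have h2 := mul_le_mul_of_nonneg_right hq hE0'
    linarith
  have s1 : 2 * E0 ≤ δr := by
    have h := hsmall (2 / δr) (by linarith)
    rwa [div_mul_eq_mul_div, div_le_one hδr] at h
  have s2 : 2 * E0 * ρ 0 ≤ δl := by
    have h := hsmall (2 * ρ 0 / δl) (by linarith)
    rw [div_mul_eq_mul_div, div_le_one hδl] at h
    linarith
  have s3 : N * E0 ≤ η := by
    have h := hsmall (N / η) (by linarith)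
    rwa [div_mul_eq_mul_div, div_le_one hη] at h
  have s4 := hsmall (2 * Ks * N * ρ 0) (by linarith)
  have s5 := hsmall (8 * Ks * N * J / θ) (by linarith)
  obtain ⟨Wr, hWr, hWr0, hWrb⟩ := exists_data_right hρ hκ hOmρ hub1 hu0 b2 b4 hE
  obtain ⟨Wl, hWl, hWl0, hWlb⟩ := exists_data_left hρ hOmρ hub0 hu0 b1 b3 hE
  obtain ⟨vr, hvr, hvr0, hvrg, hvrt, hvrw, hvrp⟩ := HR Wr hWr (2 * E0) s1 hWrb
  obtain ⟨vl, hvl, hvl0, hvlg, hvlt, hvlp⟩ := HL Wl hWl (2 * E0 * ρ 0) s2 hWlb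
  have hkl : 0 ≤ 2 * Kl * ρ 0 * E0 := by positivity
  have hkr : 0 ≤ 2 * Kr * E0 := by positivity
  have hNr : Kr * (2 * E0) ≤ N * E0 := by
    have : N * E0 = Kr * (2 * E0) + 2 * Kl * ρ 0 * E0 := by rw [hNdef]; ring
    linarith
  have hNl : Kl * (2 * E0 * ρ 0) ≤ N * E0 := by
    have : N * E0 = Kl * (2 * E0 * ρ 0) + 2 * Kr * E0 := by rw [hNdef]; ring
    linarith
  have hNE : 0 ≤ N * E0 := by positivity
  have hρθ : ∀ t, 0 ≤ t → 0 < ρ (θ * t) := fun t ht => hρ.1 _ (by positivity)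
  have hρr : ∀ t, 0 ≤ t → ρ (θr * t) ≤ ρ (θ * t) := fun t ht =>
    hρ.2.1 _ _ (by positivity) (mul_le_mul_of_nonneg_right (min_le_left _ _) ht)
  have hρl : ∀ t, 0 ≤ t → ρ (θl * t) ≤ ρ (θ * t) := fun t ht =>
    hρ.2.1 _ _ (by positivity) (mul_le_mul_of_nonneg_right (min_le_right _ _) ht)
  have hAr : ∀ t, 0 ≤ t → Kr * (2 * E0) * ρ (θr * t) ≤ N * E0 * ρ (θ * t) := fun t ht =>
    mul_le_mul hNr (hρr t ht) (hρ.1 _ (by positivity)).le hNE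
  have hAl : ∀ t, 0 ≤ t → Kl * (2 * E0 * ρ 0) * ρ (θl * t) ≤ N * E0 * ρ (θ * t) := fun t ht =>
    mul_le_mul hNl (hρl t ht) (hρ.1 _ (by positivity)).le hNE
  have hbl : ∀ t x, |vl t x - um| ≤ η ∧ |deriv (vl t) x| ≤ N * E0 := fun t x =>
    ⟨(hvlg t x).1.trans (hNl.trans s3), (hvlg t x).2.trans hNl⟩
  have hbr : ∀ t x, |vr t x - up| ≤ η ∧ |deriv (vr t) x| ≤ N * E0 := fun t x =>
    ⟨(hvrg t x).1.trans (hNr.trans s3), (hvrg t x).2.trans hNr⟩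
  obtain ⟨ψ, hψ, hψ0, hψd⟩ := exists_shock hf1 hKs HKs hvl hvr hbl hbr
  have hψ1 : ContDiff ℝ 1 ψ := hψ.of_le one_le_two
  have htl : ∀ t, 0 ≤ t → ∀ x, |vl t x - um| ≤ N * E0 * ρ (θ * t) ∧
      |deriv (vl t) x| ≤ N * E0 * ρ (θ * t) := fun t ht x =>
    ⟨(hvlt t ht x).1.trans (hAl t ht), (hvlt t ht x).2.trans (hAl t ht)⟩
  have htr : ∀ t, 0 ≤ t → ∀ x, |vr t x - up| ≤ N * E0 * ρ (θ * t) ∧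
      |deriv (vr t) x| ≤ N * E0 * ρ (θ * t) := fun t ht x =>
    ⟨(hvrt t ht x).1.trans (hAr t ht), (hvrt t ht x).2.trans (hAr t ht)⟩
  have hspeed : ∀ t, 0 ≤ t → |deriv ψ t| ≤ 2 * Ks * (N * E0) * ρ (θ * t) := fun t ht => by
    rw [(hψd t).deriv]
    refine (HKs _ _ (hbl t _).1 (hbr t _).1).2.1.trans ?_
    have := mul_le_mul_of_nonneg_left (add_le_add (htl t ht (ψ t)).1 (htr t ht (ψ t)).1) hKs.le
    linarith
  obtain ⟨hψb, ψinf, hψi, hψt⟩ := exists_limit hψ1 hψ0 hθ hρint hspeed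
  have hψ4 : ∀ t, 0 ≤ t → |ψ t| ≤ 1 / 4 := fun t ht => by
    refine (hψb t ht).trans ?_
    have : 2 * Ks * (N * E0) / θ * J = 8 * Ks * N * J / θ * E0 / 4 := by ring
    linarith
  have hacc : ∀ t, 0 ≤ t → |deriv ψ t| + |deriv (deriv ψ) t| ≤ S * (N * E0 * ρ (θ * t)) :=
    fun t ht => by
      have h1 : 2 * Ks * (N * E0 * ρ (θ * t)) ≤ 1 := by
        have h2 : ρ (θ * t) ≤ ρ 0 := hρ.2.1 _ _ le_rfl (by positivity)
        have h3 := mul_le_mul_of_nonneg_left h2 (by positivity : 0 ≤ 2 * Ks * (N * E0))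
        linarith
      have h4 := shock_deriv_bounds hf1 hKs hTl hTr HKs HTl HTr hvl hvr (fun t x => (hbl t x).1)
        (fun t x => (hbr t x).1) hψd (htl t ht _) (htr t ht _) (hvlp t ht _)
        (hvrp t ht _ (by linarith [(abs_le.1 (hψ4 t ht)).1])) h1
      rw [hSdef]
      linarith [h4.1, h4.2]
  have hbd : ∀ t x, |glue σ ψ vl vr t x| ≤ |um| + |up| + η := fun t x => by
    rcases lt_or_ge x (σ * t + ψ t) with h | h
    · rw [glue_left h]
      have h1 := abs_add_le (vl t (x - σ * t) - um) um
      rw [sub_add_cancel] at h1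
      linarith [(hbl t (x - σ * t)).1, abs_nonneg up]
    · rw [glue_right h]
      have h1 := abs_add_le (vr t (x - σ * t) - up) up
      rw [sub_add_cancel] at h1
      linarith [(hbr t (x - σ * t)).1, abs_nonneg um]
  refine ⟨ψ, hψ, hψ0, glue σ ψ vl vr, ⟨_, hbd⟩, ?_, fun K hK => ?_, ?_, fun t ht x hx => ?_,
    ψinf, ?_, fun t ht => ?_⟩
  · refine isWeakSol_of_shock hf1 hg1.continuous hvl hvr hψ (fun t ht x _ => hvlp t ht x)
      (fun t ht x hx => hvrp t ht x (by linarith [(abs_le.1 (hψ4 t ht)).1])) fun t _ => ?_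
    have h1 := (HKs _ _ (hbl t (ψ t)).1 (hbr t (ψ t)).1).1
    rw [(hψd t).deriv, add_sub_cancel, div_mul_cancel₀ _ h1]
  · exact tendsto_glue hψ.continuous hψ0 hvl.continuous hvr.continuous
      (fun x hx => by rw [hvl0, hWl0 x hx]) (fun x hx => by rw [hvr0 x hx.le, hWr0 x hx]) hbd hK
  · exact contDiffOn_glue hψ.continuous hvl hvr
  · have hmain : max |glue σ ψ vl vr t (x + σ * t + ψ t) - ub x|
        |deriv (glue σ ψ vl vr t) (x + σ * t + ψ t)| / Om x ≤ N * E0 * ρ (θ * t) := by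
      have e : x + σ * t + ψ t - σ * t = x + ψ t := by ring
      rcases lt_or_gt_of_ne hx with h | h
      · have h1 : x + σ * t + ψ t < σ * t + ψ t := by linarith
        have h2 : Om x = 1 := by rw [hOm]; simp [max_eq_right h.le]
        rw [glue_left h1, deriv_glue_left h1, e, hub0 x h, h2, div_one]
        exact max_le (htl t ht _).1 (htl t ht _).2
      · have h1 : σ * t + ψ t < x + σ * t + ψ t := by linarith
        have h2 : Om x = Real.exp (-(κp * x)) := by rw [hOm]; simp [max_eq_left h.le]
        rw [glue_right h1.le, deriv_glue_right h1, e, hub1 x h, h2, div_le_iff₀ (Real.exp_pos _)]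
        have h3 := hvrw t ht x h.le (x + ψ t) (by linarith [(abs_le.1 (hψ4 t ht)).1])
        exact (max_le h3.1 h3.2).trans
          (mul_le_mul_of_nonneg_right (hAr t ht) (Real.exp_pos _).le)
    have h1 := hacc t ht
    have h2 : (1 + S) * N * (E0 * ρ (θ * t)) ≤ C * (E0 * ρ (θ * t)) :=
      mul_le_mul_of_nonneg_right (by linarith) (mul_nonneg hE0' (hρθ t ht).le)
    linarith
  · refine hψi.trans ?_
    have h2 : 2 * Ks * N * J / θ * E0 ≤ C * E0 :=
      mul_le_mul_of_nonneg_right (by linarith) hE0'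
    have : 2 * Ks * (N * E0) / θ * J = 2 * Ks * N * J / θ * E0 := by ring
    linarith
  · refine (hψt t ht).trans ?_
    refine mul_le_mul_of_nonneg_right ?_ (setIntegral_nonneg measurableSet_Ioi fun s hs =>
      (hρ.1 s ((by positivity : 0 ≤ θ * t).trans (le_of_lt hs))).le)
    have h2 : 2 * Ks * N / θ * E0 ≤ C * E0 :=
      mul_le_mul_of_nonneg_right (by linarith) hE0'
    have : 2 * Ks * (N * E0) / θ = 2 * Ks * N / θ * E0 := by ring
    linarith
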